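/- The colored immaculate basis of NSym_A is dual to the colored dual immaculate basis of QSym_A: for all sentences I and J, ⟨𝔖_I, 𝔖*_J⟩ = δ_{I,J}. -/

import Mathlib

open scoped BigOperators

namespace ColoredImm

variable {A : Type*}

/-- A *weak sentence* over the alphabet `A`: a finite list of words (words may be empty). -/
abbrev Sentence (A : Type*) := List (List A)

/-- A genuine *sentence*: all of its words are nonempty. -/
def IsSentence (I : Sentence A) : Prop := ∀ w ∈ I, w ≠ []

/-- The size `|I|` of a sentence: its total number of letters. -/
def size (I : Sentence A) : ℕ := (I.map List.length).sum

/-- The word lengths `wℓ(I)` of a sentence. -/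
def wl (I : Sentence A) : List ℕ := I.map List.length

/-- The flattening of a weak sentence: delete all empty words. -/
def flattenWS (I : Sentence A) : Sentence A := I.filter (fun w => !w.isEmpty)

/-- `Refines J I` means `J ⪯ I`: the sentence `I` can be obtained by concatenating
some adjacent words of `J` (so `J` is a refinement of `I`, and `I` a coarsening of `J`). -/
def Refines (J I : Sentence A) : Prop :=
  ∃ P : List (Sentence A), (∀ p ∈ P, p ≠ []) ∧ P.flatten = J ∧ P.map List.flatten = I

/-! ### Fillings and colored immaculate tableaux -/

/-- An integer filling of a diagram, recorded row by row. -/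
abbrev Filling := List (List ℕ)

/-- The entry of a filling at box `b = (row, column)` (0-indexed), with default `0`. -/
def entryAt (f : Filling) (b : ℕ × ℕ) : ℕ := (f.getD b.1 []).getD b.2 0

/-- `IsCIT I f`: `f` is a colored immaculate tableau of shape `I`; that is, `f` has the
same shape as the colored composition diagram of `I`, its entries are positive integers
weakly increasing left to right along each row, and the entries in the first column are
strictly increasing from top to bottom. -/
def IsCIT (I : Sentence A) (f : Filling) : Prop :=
  f.map List.length = I.map List.length ∧
  (∀ row ∈ f, row.Chain' (· ≤ ·)) ∧
  (f.filterMap List.head?).Chain' (· < ·) ∧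
  (∀ x ∈ f.flatten, 1 ≤ x)

/-- The colors (letters of `w`) of the boxes of one row whose entry (in `row`) is `v`,
read from left to right. -/
def rowWith (w : List A) (row : List ℕ) (v : ℕ) : List A :=
  ((w.zip row).filter (fun p => p.2 == v)).map Prod.fst

/-- The word of the type of a tableau at value `v`: the colors of all boxes with entry `v`,
read left to right, from the bottom row up to the top row. -/
def typeWord (I : Sentence A) (f : Filling) (v : ℕ) : List A :=
  (((I.zip f).reverse).map (fun p => rowWith p.1 p.2 v)).flatten

/-- `HasType I f B` : the tableau `f` (of shape `I`) has type the weak sentence `B`,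
i.e. for every positive integer `v`, the colors of the boxes of `f` containing `v`
(read left to right, bottom to top) form the `v`-th word of `B`. -/
def HasType (I : Sentence A) (f : Filling) (B : Sentence A) : Prop :=
  ∀ v, 1 ≤ v → typeWord I f v = B.getD (v - 1) []

/-- `K_{J,B}`: the number of colored immaculate tableaux of shape `J` and type `B`. -/
noncomputable def KJB (J B : Sentence A) : ℕ :=
  Set.ncard {f : Filling | IsCIT J f ∧ HasType J f B}

/-! ### Standardization -/

/-- The list of boxes of a filling. -/
def boxes (f : Filling) : List (ℕ × ℕ) :=
  ((List.range f.length).map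
    (fun r => (List.range (f.getD r []).length).map (fun j => (r, j)))).flatten

/-- `beforeB f b b'`: box `b` comes strictly before box `b'` in the type-reading order of `f`
(smaller entries first; among equal entries, lower rows first, and within a row left to right). -/
def beforeB (f : Filling) (b b' : ℕ × ℕ) : Bool :=
  entryAt f b < entryAt f b' ||
    (entryAt f b == entryAt f b' && (b'.1 < b.1 || (b.1 == b'.1 && b.2 < b'.2)))

/-- The standardization of a filling: each box is renumbered (starting from `1`)
according to its position in the type-reading order. -/
def stdFill (f : Filling) : Filling :=
  (List.range f.length).map (fun r =>
    (List.range (f.getD r []).length).map (fun j =>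
      1 + ((boxes f).filter (fun b' => beforeB f b' (r, j))).length))

/-- The number of boxes of a filling. -/
def nBoxes (f : Filling) : ℕ := f.flatten.length

/-- A filling of `n` boxes is standard when its entries are exactly `1, …, n`,
each appearing once. -/
def IsStandardF (f : Filling) : Prop := f.flatten.Perm (List.range' 1 (nBoxes f))

/-! ### Descents and the colored descent composition -/

/-- The (0-indexed) row containing the value `v` in a standard filling. -/
def rowOf (f : Filling) (v : ℕ) : ℕ := f.findIdx (fun row => row.contains v)

/-- The sorted list of descents of a standard filling: those `i` with `1 ≤ i ≤ n-1`
such that `i+1` lies in a strictly lower row than `i`. -/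
def descList (f : Filling) : List ℕ :=
  (List.range' 1 (nBoxes f - 1)).filter (fun i => decide (rowOf f i < rowOf f (i + 1)))

/-- The composition of `n` associated to a set of split positions `d_1 < … < d_k`:
`(d_1, d_2 - d_1, …, n - d_k)`. -/
def compOf (ds : List ℕ) (n : ℕ) : List ℕ :=
  List.zipWith (fun a b => b - a) (0 :: ds) (ds ++ [n])

/-- Split a word into a sentence according to a composition. -/
def splitByComp : List A → List ℕ → List (List A)
  | _, [] => []
  | w, a :: rest => w.take a :: splitByComp (w.drop a) rest

/-- The color of the box containing the value `v` in a standard filling of shape `I`. -/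
def colorOf [Inhabited A] (I : Sentence A) (f : Filling) (v : ℕ) : A :=
  (I.getD (rowOf f v) []).getD ((f.getD (rowOf f v) []).findIdx (fun x => x == v)) default

/-- The maximal word of the colored descent composition of a standard filling of shape `I`:
the colors of its boxes read in the order of their integer entries. -/
def readWord [Inhabited A] (I : Sentence A) (f : Filling) : List A :=
  (List.range (nBoxes f)).map (fun i => colorOf I f (i + 1))

/-- The colored descent composition `co_A(U)` of a standard colored immaculate tableau:
read the colors of the boxes in the order of their entries, starting a new word
immediately after each descent. -/
def coA [Inhabited A] (I : Sentence A) (f : Filling) : Sentence A :=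
  if nBoxes f = 0 then [] else splitByComp (readWord I f) (compOf (descList f) (nBoxes f))

/-- `L_{J,C}`: the number of standard colored immaculate tableaux of shape `J`
with colored descent composition `C`. -/
noncomputable def LJC [Inhabited A] (J C : Sentence A) : ℕ :=
  Set.ncard {f : Filling | IsCIT J f ∧ IsStandardF f ∧ coA J f = C}

/-! ### The colored quasisymmetric functions `QSym_A` -/

/-- A (normal form of a) monomial in the partially commutative variables `x_{a,i}`:
a pair consisting of the list of words `(w_1, …, w_m)` and the list of (strictly
increasing, positive) second indices `(j_1 < … < j_m)`, representing
`x_{w_1,j_1} ⋯ x_{w_m,j_m}`. -/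
abbrev Mono (A : Type*) := List (List A) × List ℕ

/-- A colored quasisymmetric "series": a formal linear combination of monomials,
recorded by its coefficient function.  `QSym_A` itself is the span of the colored
monomial functions `MQ I` inside this space. -/
abbrev QSymA (A : Type*) := Mono A → ℚ

/-- Validity of a monomial normal form: words and indices match up, the indices are
strictly increasing positive integers, and all words are nonempty. -/
def ValidMono (m : Mono A) : Prop :=
  m.1.length = m.2.length ∧ m.2.Chain' (· < ·) ∧ (∀ j ∈ m.2, 1 ≤ j) ∧ ∀ w ∈ m.1, w ≠ []

open Classical in
/-- The colored monomial quasisymmetric function `M_I`: the sum of all monomials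
`x_{w_1,j_1} ⋯ x_{w_m,j_m}` with `j_1 < … < j_m`, where `I = (w_1, …, w_m)`. -/
noncomputable def MQ (I : Sentence A) : QSymA A := fun m =>
  if m.1 = I ∧ ValidMono m then 1 else 0

/-- The largest entry of a filling. -/
def maxEntry (f : Filling) : ℕ := f.flatten.foldr max 0

/-- The monomial `x_T` of a colored immaculate tableau `T = f` of shape `I`:
for `T` of type `B = (u_1, …, u_j)` it is `x_{u_1,1} x_{u_2,2} ⋯ x_{u_j,j}`
(empty words are skipped). -/
def monoOf (I : Sentence A) (f : Filling) : Mono A :=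
  let vs := ((List.range (maxEntry f)).map (· + 1)).filter (fun v => !(typeWord I f v).isEmpty)
  (vs.map (typeWord I f), vs)

/-- The colored dual immaculate function `𝔖*_J = Σ_T x_T`, the sum of the monomials of all
colored immaculate tableaux `T` of shape `J` (its coefficient at a monomial `m` is the
number of such tableaux with `x_T = m`). -/
noncomputable def dualImm (J : Sentence A) : QSymA A := fun m =>
  (Set.ncard {f : Filling | IsCIT J f ∧ monoOf J f = m} : ℚ)

/-- The colored fundamental quasisymmetric function `F_I = Σ_{J ⪯ I} M_J`. -/
noncomputable def FQ (I : Sentence A) : QSymA A :=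
  ∑ᶠ J ∈ {J : Sentence A | Refines J I}, MQ J

/-! ### The colored immaculate descent graph -/

/-- Edges of the colored immaculate descent graph: a directed edge from `I` to `J` (`J ≠ I`)
whenever some standard colored immaculate tableau of shape `I` has colored descent
composition `J`. -/
def IsEdge [Inhabited A] (I J : Sentence A) : Prop := J ≠ I ∧ LJC I J ≠ 0

/-- Directed paths from `I` to `K` in the colored immaculate descent graph, recorded by
their (nonempty) lists of successive vertices; the path `[I]` is the empty path at `I`. -/
def PathsFromTo [Inhabited A] (I K : Sentence A) : Set (List (Sentence A)) :=
  {p | p.head? = some I ∧ p.getLast? = some K ∧ p.Chain' IsEdge}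

/-- The signed weight `(-1)^{ℓ(𝒫)} prod(𝒫)` of a directed path `𝒫`:
`ℓ(𝒫)` is its number of edges and `prod(𝒫)` the product of its edge weights `L_{I,J}`. -/
noncomputable def pathWeight [Inhabited A] (p : List (Sentence A)) : ℚ :=
  ((-1 : ℚ)) ^ (p.length - 1) * ((p.zip p.tail).map (fun e => (LJC e.1 e.2 : ℚ))).prod

/-- `L⁻¹_{I,K} = Σ_𝒫 (-1)^{ℓ(𝒫)} prod(𝒫)`, summed over all directed paths `𝒫`
from `I` to `K` in the colored immaculate descent graph. -/
noncomputable def Linv [Inhabited A] (I K : Sentence A) : ℚ :=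
  ∑ᶠ p ∈ PathsFromTo I K, pathWeight p

/-! ### The colored noncommutative symmetric functions `NSym_A` -/

/-- A formal series over the complete homogeneous basis `{H_I}` of `NSym_A`, recorded by its
coefficient function on (weak) sentences.  `NSym_A` itself consists of the finitely
supported elements supported on genuine sentences; see `InNSym`. -/
abbrev NSymA (A : Type*) := Sentence A → ℚ

/-- Membership in `NSym_A` proper: finitely supported, and supported on genuine sentences. -/
def InNSym (f : NSymA A) : Prop :=
  (Function.support f).Finite ∧ ∀ I, f I ≠ 0 → IsSentence I

open Classical in
/-- The colored complete homogeneous noncommutative symmetric function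
`H_I = H_{w_1} ⋯ H_{w_k}`. -/
noncomputable def Hd (I : Sentence A) : NSymA A := fun J => if J = I then 1 else 0

/-- `H_w` for a single word `w`, with `H_∅ = 1`. -/
noncomputable def Hw (w : List A) : NSymA A := if w.isEmpty then Hd [] else Hd [w]

/-- Multiplication in `NSym_A` (the concatenation product, extended to series):
`H_I · H_J = H_{I ⬝ J}`. -/
def mulN (f g : NSymA A) : NSymA A := fun I =>
  ∑ j ∈ Finset.range (I.length + 1), f (I.take j) * g (I.drop j)

/-- The duality pairing `⟨·,·⟩ : NSym_A × QSym_A → ℚ`, determined by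
`⟨H_I, M_J⟩ = δ_{I,J}`: the `M_I`-coefficient of a quasisymmetric function is its
coefficient on the monomial `x_{w_1,1} x_{w_2,2} ⋯ x_{w_k,k}`. -/
noncomputable def pairNQ (G : NSymA A) (F : QSymA A) : ℚ :=
  ∑ᶠ I ∈ {I : Sentence A | IsSentence I}, G I * F (I, List.range' 1 I.length)

/-- All ways of splitting each word of a list of words into a prefix and a suffix. -/
def splitsOf : List (List A) → List (List (List A) × List (List A))
  | [] => [([], [])]
  | w :: ws =>
      (((splitsOf ws).map (fun p =>
        (List.range (w.length + 1)).map (fun t => (w.take t :: p.1, w.drop t :: p.2))))).flatten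

/-- Restriction of a candidate monomial: keep only the nonempty words together with
their indices. -/
def restrictMono (ws : List (List A)) (js : List ℕ) : Mono A :=
  let ps := (ws.zip js).filter (fun p => !p.1.isEmpty)
  (ps.map Prod.fst, ps.map Prod.snd)

/-- The product of colored quasisymmetric series: the coefficient of a monomial in `F·G`
is the sum, over all ways of writing each of its words as a concatenation of a word of a
monomial of `F` (on the left) and a word of a monomial of `G` (on the right), of the
products of the corresponding coefficients. -/
def mulQ (F G : QSymA A) : QSymA A := fun m =>
  ((splitsOf m.1).map (fun p => F (restrictMono p.1 m.2) * G (restrictMono p.2 m.2))).sum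

/-- The right perp operator `M^⊸` of `M ∈ QSym_A`, the linear operator on `NSym_A`
determined by `⟨M^⊸(H), G⟩ = ⟨H, G·M⟩`; explicitly, for the dual bases `{M_I}` and `{H_I}`,
`M^⊸(H) = Σ_I ⟨H, M_I · M⟩ H_I`. -/
noncomputable def rperp (M : QSymA A) (H : NSymA A) : NSymA A :=
  ∑ᶠ I ∈ {I : Sentence A | IsSentence I}, pairNQ H (mulQ (MQ I) M) • Hd I

/-- The colored noncommutative Bernstein operator
`𝔹_v = Σ_u Σ_{Q : w(Q^r) = u} (-1)^{ℓ(Q)} H_{v·u} · (Σ_{S ⪰ Q} M_S^⊸)`,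
where `Q` runs over all sentences, `u = w(Q^r)` is the concatenation of the words of `Q`
in reverse order, and `S` runs over all coarsenings of `Q`. -/
noncomputable def Bern (v : List A) (f : NSymA A) : NSymA A :=
  ∑ᶠ Q ∈ {Q : Sentence A | IsSentence Q},
    ((-1 : ℚ)) ^ Q.length •
      mulN (Hw (v ++ Q.reverse.flatten))
        (∑ᶠ S ∈ {S : Sentence A | Refines Q S}, rperp (MQ S) f)

/-- The colored immaculate function `𝔖_J = 𝔹_{v_1} 𝔹_{v_2} ⋯ 𝔹_{v_h}(1)`. -/
noncomputable def ImmS (J : Sentence A) : NSymA A := J.foldr Bern (Hd [])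

/-- The colored ribbon function `R_I = Σ_{J ⪰ I} (-1)^{ℓ(J) - ℓ(I)} H_J`. -/
noncomputable def Rib (I : Sentence A) : NSymA A :=
  ∑ᶠ J ∈ {J : Sentence A | Refines I J}, ((-1 : ℚ)) ^ (I.length - J.length) • Hd J

/-- The Pieri relation `J ⊂_w K` for a sentence `J = (v_1, …, v_h)` and a word `w`:
`K = (u_1, …, u_g)` with `h ≤ g ≤ h+1` (setting `v_{h+1} = ∅`) and `u_j = v_j · q_j`
for words `q_j` (possibly empty) whose reversed concatenation `q_g ⋯ q_1` equals `w`. -/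
def PieriRel (J : Sentence A) (w : List A) (K : Sentence A) : Prop :=
  J.length ≤ K.length ∧ K.length ≤ J.length + 1 ∧
  ∃ q : List (List A), q.length = K.length ∧ q.reverse.flatten = w ∧
    ∀ j < K.length, K.getD j [] = J.getD j [] ++ q.getD j []

/-- Right containment of a weak sentence `K` in `J`: same length, and each word of `K` is a
suffix of the corresponding word of `J`. -/
def RightContained (K J : Sentence A) : Prop :=
  K.length = J.length ∧ ∀ i < J.length, (K.getD i []).IsSuffix (J.getD i [])

/-- The weak sentence `J/_R K`: remove each word of `K` from the right end of the
corresponding word of `J`. -/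
def rightQuot (J K : Sentence A) : Sentence A :=
  List.zipWith (fun v u => v.take (v.length - u.length)) J K

/-- Left containment `J ⊆_L I`: `ℓ(J) ≤ ℓ(I)` and each word of `J` is a prefix of the
corresponding word of `I`. -/
def LeftContained (J I : Sentence A) : Prop :=
  J.length ≤ I.length ∧ ∀ i < J.length, (J.getD i []).IsPrefix (I.getD i [])

/-- A skew colored immaculate tableau of shape `I/J`: a filling of the active boxes
(the `i`-th row keeps the last `|w_i| - |v_i|` boxes) with positive integers, rows weakly
increasing left to right, and the entries in the (active part of the) first column of `I`
strictly increasing top to bottom. -/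
def IsSkewCIT (I J : Sentence A) (f : Filling) : Prop :=
  f.map List.length =
    (List.range I.length).map (fun i => (I.getD i []).length - (J.getD i []).length) ∧
  (∀ row ∈ f, row.Chain' (· ≤ ·)) ∧
  ((List.range I.length).filterMap
    (fun i => if (J.getD i []).length = 0 then (f.getD i []).head? else none)).Chain' (· < ·) ∧
  (∀ x ∈ f.flatten, 1 ≤ x)

/-- The word of the type of a skew tableau at value `v`: the colors of the active boxes with
entry `v`, read left to right, bottom to top. -/
def skewTypeWord (I J : Sentence A) (f : Filling) (v : ℕ) : List A :=
  (((List.range I.length).reverse).map (fun i =>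
    rowWith ((I.getD i []).drop (J.getD i []).length) (f.getD i []) v)).flatten

/-- `SkewHasType I J f K` : the skew tableau `f` of shape `I/J` has type `K`. -/
def SkewHasType (I J : Sentence A) (f : Filling) (K : Sentence A) : Prop :=
  ∀ v, 1 ≤ v → skewTypeWord I J f v = K.getD (v - 1) []

/-! ### The complement involution `ψ` and the row-strict functions -/

/-- The complement `I^c` of a sentence: the unique sentence with the same maximal word
that splits exactly where `I` does not. -/
def complSent (I : Sentence A) : Sentence A :=
  let w := I.flatten
  let n := w.length
  if n = 0 then []
  else
    let splits := (((wl I).scanl (· + ·) 0).drop 1).dropLast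
    let csplits := (List.range' 1 (n - 1)).filter (fun i => !(splits.contains i))
    splitByComp w (compOf csplits n)

/-- The `M_I`-coefficient of a colored quasisymmetric function. -/
noncomputable def coeffM (G : QSymA A) (I : Sentence A) : ℚ := G (I, List.range' 1 I.length)

/-- The image of `M_I` under `ψ`, via `M_I = Σ_{J ⪯ I} (-1)^{ℓ(J)-ℓ(I)} F_J` and
`ψ(F_J) = F_{J^c}`. -/
noncomputable def psiM (I : Sentence A) : QSymA A :=
  ∑ᶠ J ∈ {J : Sentence A | Refines J I}, ((-1 : ℚ)) ^ (J.length - I.length) • FQ (complSent J)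

/-- The linear involution `ψ` of `QSym_A`, determined by `ψ(F_I) = F_{I^c}`. -/
noncomputable def psiQ (G : QSymA A) : QSymA A :=
  ∑ᶠ I ∈ {I : Sentence A | IsSentence I}, coeffM G I • psiM I

/-- A colored row-strict immaculate tableau of shape `I`: entries strictly increase left to
right along each row and weakly increase top to bottom down the first column. -/
def IsCRSIT (I : Sentence A) (f : Filling) : Prop :=
  f.map List.length = I.map List.length ∧
  (∀ row ∈ f, row.Chain' (· < ·)) ∧
  (f.filterMap List.head?).Chain' (· ≤ ·) ∧
  (∀ x ∈ f.flatten, 1 ≤ x)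

/-- The word of the type of a row-strict tableau at value `v`: the colors of the boxes with
entry `v`, read left to right, top to bottom. -/
def rsTypeWord (I : Sentence A) (f : Filling) (v : ℕ) : List A :=
  ((I.zip f).map (fun p => rowWith p.1 p.2 v)).flatten

/-- The monomial `x_T` of a colored row-strict immaculate tableau. -/
def rsMonoOf (I : Sentence A) (f : Filling) : Mono A :=
  let vs := ((List.range (maxEntry f)).map (· + 1)).filter (fun v => !(rsTypeWord I f v).isEmpty)
  (vs.map (rsTypeWord I f), vs)

/-- The colored row-strict dual immaculate function `ℛ𝔖*_J = Σ_T x_T`, summed over all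
colored row-strict immaculate tableaux `T` of shape `J`. -/
noncomputable def rsDualImm (J : Sentence A) : QSymA A := fun m =>
  (Set.ncard {f : Filling | IsCRSIT J f ∧ rsMonoOf J f = m} : ℚ)

/-- `α ⪰ β` in the reverse lexicographic order on compositions: at the first index where
they differ, `α` has the *smaller* entry (padding with zeros). -/
def RevLexGE (α β : List ℕ) : Prop :=
  α = β ∨ ∃ i, (∀ j < i, α.getD j 0 = β.getD j 0) ∧ α.getD i 0 < β.getD i 0

/-! ### Uncolored (ordinary) versions, for `QSym` -/

namespace Uncolored

/-- A composition: a list of positive integers. -/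
def IsComposition (α : List ℕ) : Prop := ∀ a ∈ α, 1 ≤ a

/-- `β ⪯ α`: the composition `α` is obtained by summing adjacent parts of `β`. -/
def RefinesC (β α : List ℕ) : Prop :=
  ∃ P : List (List ℕ), (∀ p ∈ P, p ≠ []) ∧ P.flatten = β ∧ P.map List.sum = α

/-- A monomial `x_{i_1}^{a_1} ⋯ x_{i_m}^{a_m}` recorded by its exponents and its
strictly increasing positive indices. -/
abbrev MonoU := List ℕ × List ℕ

/-- A quasisymmetric "series", recorded by its coefficient function on monomials.
`QSym` is the span of the monomial functions `MU α` inside this space. -/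
abbrev QSymU := MonoU → ℚ

/-- Validity of a monomial: matching lengths, strictly increasing positive indices,
positive exponents. -/
def ValidMonoU (m : MonoU) : Prop :=
  m.1.length = m.2.length ∧ m.2.Chain' (· < ·) ∧ (∀ j ∈ m.2, 1 ≤ j) ∧ ∀ a ∈ m.1, 1 ≤ a

open Classical in
/-- The monomial quasisymmetric function `M_α`. -/
noncomputable def MU (α : List ℕ) : QSymU := fun m =>
  if m.1 = α ∧ ValidMonoU m then 1 else 0

/-- The fundamental quasisymmetric function `F_α = Σ_{β ⪯ α} M_β`. -/
noncomputable def FU (α : List ℕ) : QSymU :=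
  ∑ᶠ β ∈ {β : List ℕ | RefinesC β α}, MU β

/-- An immaculate tableau of shape `α`: positive integer entries, rows weakly increasing
left to right, first column strictly increasing top to bottom. -/
def IsIT (α : List ℕ) (f : Filling) : Prop :=
  f.map List.length = α ∧
  (∀ row ∈ f, row.Chain' (· ≤ ·)) ∧
  (f.filterMap List.head?).Chain' (· < ·) ∧
  (∀ x ∈ f.flatten, 1 ≤ x)

/-- The number of boxes of `f` with entry `v`. -/
def countOf (f : Filling) (v : ℕ) : ℕ := (f.flatten.filter (fun x => x == v)).length

/-- The monomial `x^T` of an immaculate tableau `T` of type `β`: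
`x_1^{β_1} ⋯ x_h^{β_h}` (zero exponents skipped). -/
def monoOfU (f : Filling) : MonoU :=
  let vs := ((List.range (maxEntry f)).map (· + 1)).filter (fun v => decide (countOf f v ≠ 0))
  (vs.map (countOf f), vs)

/-- The dual immaculate function `𝔖*_α = Σ_T x^T`, summed over all immaculate tableaux
of shape `α`. -/
noncomputable def dualImmU (α : List ℕ) : QSymU := fun m =>
  (Set.ncard {f : Filling | IsIT α f ∧ monoOfU f = m} : ℚ)

/-- The descent composition `co(U)` of a standard immaculate tableau. -/
def descComp (f : Filling) : List ℕ :=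
  if nBoxes f = 0 then [] else compOf (descList f) (nBoxes f)

/-- `L_{α,β}`: the number of standard immaculate tableaux of shape `α` with descent
composition `β`. -/
noncomputable def LU (α β : List ℕ) : ℕ :=
  Set.ncard {f : Filling | IsIT α f ∧ IsStandardF f ∧ descComp f = β}

/-- Edges of the immaculate descent graph `𝔇^n`. -/
def IsEdgeU (α β : List ℕ) : Prop := β ≠ α ∧ LU α β ≠ 0

/-- Directed paths from `α` to `β` in the immaculate descent graph, recorded by their
lists of successive vertices; `[α]` is the empty path at `α`. -/
def PathsU (α β : List ℕ) : Set (List (List ℕ)) :=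
  {p | p.head? = some α ∧ p.getLast? = some β ∧ p.Chain' IsEdgeU}

/-- The signed weight `(-1)^{ℓ(𝒫)} prod(𝒫)` of a path. -/
noncomputable def pathWeightU (p : List (List ℕ)) : ℚ :=
  ((-1 : ℚ)) ^ (p.length - 1) * ((p.zip p.tail).map (fun e => (LU e.1 e.2 : ℚ))).prod

/-- `L⁻¹_{α,β} = Σ_𝒫 (-1)^{ℓ(𝒫)} prod(𝒫)`, over directed paths from `α` to `β` in `𝔇^n`. -/
noncomputable def LinvU (α β : List ℕ) : ℚ :=
  ∑ᶠ p ∈ PathsU α β, pathWeightU p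

end Uncolored

end ColoredImm

namespace ColoredImm

/-!
The Bernstein operator `𝔹_v` is adjoint to the removal of a first row:
`⟨𝔹_v f, 𝔖*_{(j, J)}⟩ = δ_{v,j} ⟨f, 𝔖*_J⟩`, and `⟨𝔹_v f, 𝔖*_∅⟩ = 0`; duality follows by induction
on the number of rows.

For the adjunction, `M_S^⊸ H_L` collects the ways of cutting each word of `L` into a prefix and a
suffix such that the nonempty suffixes form `S`, and keeps the prefixes.  In a tableau of shape
`(j, J)` and type `(w, B)` with `w ≠ ∅`, the first row consists of `w` followed by suffixes of the
words of `B`, while the remaining rows form a tableau of shape `J` whose type is given by the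
prefixes.  Applied to `𝔹_v H_L`, this cuts every word of `L` into three parts; the signs
`(-1)^{ℓ(Q)}` cancel all terms except the one in which the last two parts of every word are empty,
and what is left is the number of tableaux of shape `J` and type `L`, provided that `v = j`.
-/

section

variable {A : Type*}

/-! ### Sums -/

lemma finsum_mem_sum_filter {X Y M : Type*} [AddCommMonoid M] {P : Set Y} {r : X → Y → Prop}
    [∀ x y, Decidable (r x y)] (T : Finset X) (R : X → Finset Y)
    (hR : ∀ x ∈ T, ∀ y, y ∈ R x ↔ y ∈ P ∧ r x y) (g : X → Y → M) :
    ∑ᶠ y ∈ P, ∑ x ∈ T with r x y, g x y = ∑ x ∈ T, ∑ y ∈ R x, g x y := by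
  classical
  have hsupp : P ∩ Function.support (fun y => ∑ x ∈ T with r x y, g x y) =
      ↑(T.biUnion R) ∩ Function.support (fun y => ∑ x ∈ T with r x y, g x y) := by
    ext y
    refine and_congr_left fun hy => ⟨fun hP => ?_, fun hy' => ?_⟩
    · obtain ⟨x, hx, -⟩ := Finset.exists_ne_zero_of_sum_ne_zero hy
      obtain ⟨hxT, hxy⟩ := Finset.mem_filter.1 hx
      exact Finset.mem_coe.2 (Finset.mem_biUnion.2 ⟨x, hxT, (hR x hxT y).2 ⟨hP, hxy⟩⟩)
    · obtain ⟨x, hxT, hxy⟩ := Finset.mem_biUnion.1 (Finset.mem_coe.1 hy')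
      exact ((hR x hxT y).1 hxy).1
  rw [finsum_mem_eq_sum_of_inter_support_eq _ hsupp]
  refine Finset.sum_comm' fun y x => ?_
  simp only [Finset.mem_biUnion, Finset.mem_filter]
  constructor
  · rintro ⟨⟨x', hx', hy'⟩, hx, hxy⟩
    exact ⟨(hR x hx y).2 ⟨((hR x' hx' y).1 hy').1, hxy⟩, hx⟩
  · rintro ⟨hy, hx⟩
    exact ⟨⟨x, hx, hy⟩, hx, ((hR x hx y).1 hy).2⟩

/-! ### Flattening -/

@[simp] lemma isSentence_nil : IsSentence ([] : Sentence A) := by simp [IsSentence]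

@[simp] lemma isSentence_cons {w : List A} {L : Sentence A} :
    IsSentence (w :: L) ↔ w ≠ [] ∧ IsSentence L := by simp [IsSentence]

@[simp] lemma flattenWS_nil : flattenWS ([] : Sentence A) = [] := rfl

@[simp] lemma flattenWS_nil_cons (L : Sentence A) : flattenWS ([] :: L) = flattenWS L := rfl

lemma flattenWS_cons_of_ne_nil {w : List A} (hw : w ≠ []) (L : Sentence A) :
    flattenWS (w :: L) = w :: flattenWS L := by
  simp [flattenWS, hw]

lemma flattenWS_cons_flattenWS (w : List A) (L : Sentence A) :
    flattenWS (w :: flattenWS L) = flattenWS (w :: L) := by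
  simp [flattenWS, List.filter_cons]

lemma isSentence_flattenWS (L : Sentence A) : IsSentence (flattenWS L) := by
  simp [IsSentence, flattenWS]

lemma IsSentence.flattenWS_eq {L : Sentence A} (hL : IsSentence L) : flattenWS L = L := by
  simpa [IsSentence, flattenWS] using hL

/-! ### Splittings -/

/-- The deconcatenations `w = y.1 · y.2` of a word. -/
def wordSplits (w : List A) : Finset (List A × List A) :=
  ⟨(List.range (w.length + 1)).map fun t => (w.take t, w.drop t), by
    rw [Multiset.coe_nodup]
    refine List.Nodup.map_on (fun s hs t ht hst => ?_) List.nodup_range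
    have := congrArg (fun y => y.1.length) hst
    simp only [List.length_take, List.mem_range] at this hs ht
    omega⟩

lemma mem_wordSplits {w : List A} {y : List A × List A} : y ∈ wordSplits w ↔ y.1 ++ y.2 = w := by
  simp only [wordSplits, Finset.mem_mk, Multiset.mem_coe, List.mem_map, List.mem_range]
  constructor
  · rintro ⟨t, -, rfl⟩
    exact List.take_append_drop t w
  · rintro rfl
    exact ⟨y.1.length, by simp, by simp⟩

lemma wordSplits_nil : wordSplits ([] : List A) = {([], [])} := by
  ext y
  simp [mem_wordSplits, Prod.ext_iff]

lemma sum_wordSplits_assoc {M : Type*} [AddCommMonoid M] (w : List A)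
    (f : List A → List A → List A → M) :
    ∑ y ∈ wordSplits w, ∑ z ∈ wordSplits y.1, f z.1 z.2 y.2 =
      ∑ y ∈ wordSplits w, ∑ z ∈ wordSplits y.2, f y.1 z.1 z.2 := by
  simp only [Finset.sum_sigma']
  refine Finset.sum_nbij' (fun p => ⟨(p.2.1, p.2.2 ++ p.1.2), (p.2.2, p.1.2)⟩)
    (fun p => ⟨(p.1.1 ++ p.2.1, p.2.2), (p.1.1, p.2.1)⟩) ?_ ?_ ?_ ?_ ?_ <;>
  simp only [Finset.mem_sigma, mem_wordSplits] <;>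
  rintro ⟨⟨a, b⟩, c, d⟩ ⟨hw, hab⟩ <;>
  dsimp only at hw hab ⊢ <;>
  subst hab hw <;>
  simp

/-- The ways of cutting every word of a weak sentence `L` into a prefix and a suffix, recorded as
the pair (weak sentence of prefixes, weak sentence of suffixes).  This is the coproduct of `H_L`
before empty words are discarded. -/
def splits : Sentence A → Finset (Sentence A × Sentence A)
  | [] => {([], [])}
  | w :: L => (splits L ×ˢ wordSplits w).map
      ⟨fun p => (p.2.1 :: p.1.1, p.2.2 :: p.1.2), fun p q h => by
        simp only [Prod.mk.injEq, List.cons.injEq] at h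
        ext1 <;> ext1 <;> tauto⟩

lemma sum_splits_nil {M : Type*} [AddCommMonoid M] (f : Sentence A × Sentence A → M) :
    ∑ x ∈ splits [], f x = f ([], []) := by
  simp [splits]

lemma sum_splits_cons {M : Type*} [AddCommMonoid M] (w : List A) (L : Sentence A)
    (f : Sentence A × Sentence A → M) :
    ∑ x ∈ splits (w :: L), f x =
      ∑ x ∈ splits L, ∑ y ∈ wordSplits w, f (y.1 :: x.1, y.2 :: x.2) := by
  rw [splits, Finset.sum_map, Finset.sum_product]
  rfl

lemma mem_splits_cons {w : List A} {L : Sentence A} {x : Sentence A × Sentence A} :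
    x ∈ splits (w :: L) ↔
      ∃ z ∈ splits L, ∃ y ∈ wordSplits w, (y.1 :: z.1, y.2 :: z.2) = x := by
  simp only [splits, Finset.mem_map, Finset.mem_product, Prod.exists]
  exact ⟨fun ⟨p, q, a, b, ⟨hz, hy⟩, h⟩ => ⟨p, q, hz, a, b, hy, h⟩,
    fun ⟨p, q, hz, a, b, hy, h⟩ => ⟨p, q, a, b, ⟨hz, hy⟩, h⟩⟩

lemma mem_splits {L : Sentence A} {x : Sentence A × Sentence A} :
    x ∈ splits L ↔ x.1.length = x.2.length ∧ List.zipWith (· ++ ·) x.1 x.2 = L := by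
  obtain ⟨p, q⟩ := x
  induction L generalizing p q with
  | nil => cases p <;> cases q <;> simp [splits]
  | cons w L ih =>
    cases p <;> cases q <;> simp [mem_splits_cons, mem_wordSplits, ih, and_left_comm]

lemma length_fst_of_mem_splits {L : Sentence A} {x : Sentence A × Sentence A}
    (hx : x ∈ splits L) : x.1.length = L.length := by
  obtain ⟨hlen, rfl⟩ := mem_splits.1 hx
  simp [hlen]

lemma length_snd_of_mem_splits {L : Sentence A} {x : Sentence A × Sentence A}
    (hx : x ∈ splits L) : x.2.length = L.length :=
  (mem_splits.1 hx).1.symm.trans (length_fst_of_mem_splits hx)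

lemma sum_map_splitsOf (L : Sentence A) (f : Sentence A × Sentence A → ℚ) :
    ((splitsOf L).map f).sum = ∑ x ∈ splits L, f x := by
  induction L generalizing f with
  | nil => simp [splitsOf, splits]
  | cons w L ih =>
    rw [sum_splits_cons, ← ih, splitsOf, List.map_flatten, List.sum_flatten, List.map_map,
      List.map_map]
    refine congrArg List.sum (List.map_congr_left fun x _ => ?_)
    simp [Finset.sum, wordSplits, Function.comp_def]

lemma sum_splits_assoc {M : Type*} [AddCommMonoid M] (L : Sentence A)
    (f : Sentence A → Sentence A → Sentence A → M) :
    ∑ x ∈ splits L, ∑ y ∈ splits x.1, f y.1 y.2 x.2 =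
      ∑ x ∈ splits L, ∑ y ∈ splits x.2, f x.1 y.1 y.2 := by
  induction L generalizing f with
  | nil => simp [sum_splits_nil]
  | cons w L ih =>
    have hswap (x : Sentence A × Sentence A) :
        ∑ a ∈ wordSplits w, ∑ y ∈ splits x.1, ∑ b ∈ wordSplits a.1,
            f (b.1 :: y.1) (b.2 :: y.2) (a.2 :: x.2) =
          ∑ y ∈ splits x.1, ∑ a ∈ wordSplits w, ∑ b ∈ wordSplits a.2,
            f (a.1 :: y.1) (b.1 :: y.2) (b.2 :: x.2) := by
      rw [Finset.sum_comm]
      exact Finset.sum_congr rfl fun y _ =>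
        sum_wordSplits_assoc w fun p q r => f (p :: y.1) (q :: y.2) (r :: x.2)
    simp only [sum_splits_cons, hswap]
    rw [ih fun p q r =>
      ∑ a ∈ wordSplits w, ∑ b ∈ wordSplits a.2, f (a.1 :: p) (b.1 :: q) (b.2 :: r)]
    exact Finset.sum_congr rfl fun x _ => Finset.sum_comm

lemma sum_splits_flattenWS {M : Type*} [AddCommMonoid M] (L : Sentence A)
    (f : Sentence A → List A → M) :
    ∑ x ∈ splits (flattenWS L), f (flattenWS x.1) x.2.flatten =
      ∑ x ∈ splits L, f (flattenWS x.1) x.2.flatten := by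
  induction L generalizing f with
  | nil => rfl
  | cons w L ih =>
    rcases eq_or_ne w [] with rfl | hw
    · simpa [sum_splits_cons, wordSplits_nil] using ih f
    · rw [flattenWS_cons_of_ne_nil hw]
      simp only [sum_splits_cons]
      rw [Finset.sum_comm, Finset.sum_comm (s := splits L)]
      refine Finset.sum_congr rfl fun y _ => ?_
      simpa [flattenWS, List.filter_cons, apply_ite] using
        ih fun p u => f (flattenWS (y.1 :: p)) (y.2 ++ u)

lemma sum_splits_ite_flatten_snd_eq_nil {M : Type*} [AddCommMonoid M] (L : Sentence A)
    (f : Sentence A → M) :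
    ∑ x ∈ splits L, (if flattenWS x.2 = [] then f x.1 else 0) = f L := by
  induction L generalizing f with
  | nil => simp [sum_splits_nil]
  | cons w L ih =>
    have hword (x : Sentence A × Sentence A) :
        ∑ y ∈ wordSplits w, (if flattenWS (y.2 :: x.2) = [] then f (y.1 :: x.1) else 0) =
          if flattenWS x.2 = [] then f (w :: x.1) else 0 := by
      rw [Finset.sum_eq_single (w, []) _ fun h => absurd (mem_wordSplits.2 (by simp)) h]
      · rfl
      · rintro ⟨a, b⟩ hy hne
        obtain rfl : a ++ b = w := mem_wordSplits.1 hy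
        have hb : b ≠ [] := by rintro rfl; simp at hne
        simp [flattenWS_cons_of_ne_nil hb]
    rw [sum_splits_cons, Finset.sum_congr rfl fun x _ => hword x]
    exact ih fun p => f (w :: p)

/-! ### Refinements -/

lemma refines_nil_right {Q : Sentence A} : Refines Q [] ↔ Q = [] := by
  constructor
  · rintro ⟨P, -, rfl, hP⟩
    simp [List.map_eq_nil_iff.1 hP]
  · rintro rfl
    exact ⟨[], by simp⟩

lemma not_refines_nil_cons (k : List A) (S : Sentence A) : ¬ Refines [] (k :: S) := by
  rintro ⟨P, hne, hflat, hmap⟩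
  obtain ⟨p, P, rfl, -, -⟩ := List.map_eq_cons_iff.1 hmap
  simp_all

lemma refines_cons_cons {q k : List A} {Q S : Sentence A} :
    Refines (q :: Q) (k :: S) ↔
      q = k ∧ Refines Q S ∨ ∃ b, q ++ b = k ∧ Refines Q (b :: S) := by
  constructor
  · rintro ⟨P, hne, hflat, hmap⟩
    obtain ⟨p, P, rfl, rfl, rfl⟩ := List.map_eq_cons_iff.1 hmap
    obtain ⟨hp, hP⟩ := List.forall_mem_cons.1 hne
    obtain ⟨q', p, rfl⟩ := List.exists_cons_of_ne_nil hp
    obtain ⟨rfl, rfl⟩ : q' = q ∧ p ++ P.flatten = Q := by simpa using hflat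
    rcases eq_or_ne p [] with rfl | hp'
    · exact Or.inl ⟨by simp, P, hP, rfl, rfl⟩
    · exact Or.inr ⟨p.flatten, rfl, p :: P, List.forall_mem_cons.2 ⟨hp', hP⟩, rfl, rfl⟩
  · rintro (⟨rfl, P, hne, rfl, rfl⟩ | ⟨b, rfl, P, hne, rfl, hmap⟩)
    · exact ⟨[q] :: P, by simpa using hne, rfl, by simp⟩
    · obtain ⟨p, P, rfl, rfl, rfl⟩ := List.map_eq_cons_iff.1 hmap
      exact ⟨(q :: p) :: P, by simpa using (List.forall_mem_cons.1 hne).2, rfl, by simp⟩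

lemma IsSentence.not_refines_nil_cons {Q : Sentence A} (hQ : IsSentence Q) (S : Sentence A) :
    ¬ Refines Q ([] :: S) := by
  cases Q with
  | nil => exact ColoredImm.not_refines_nil_cons [] S
  | cons q Q =>
    rw [refines_cons_cons]
    have hq : q ≠ [] := (isSentence_cons.1 hQ).1
    simp [hq]

lemma IsSentence.refines_cons_cons {q k : List A} {Q S : Sentence A} (hQ : IsSentence Q)
    (hS : IsSentence S) :
    Refines (q :: Q) (k :: S) ↔ ∃ b, q ++ b = k ∧ Refines Q (flattenWS (b :: S)) := by
  rw [ColoredImm.refines_cons_cons]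
  constructor
  · rintro (⟨rfl, h⟩ | ⟨b, rfl, h⟩)
    · exact ⟨[], by simp, by rwa [flattenWS_nil_cons, hS.flattenWS_eq]⟩
    · have hb : b ≠ [] := by rintro rfl; exact hQ.not_refines_nil_cons S h
      exact ⟨b, rfl, by rwa [flattenWS_cons_of_ne_nil hb, hS.flattenWS_eq]⟩
  · rintro ⟨b, rfl, h⟩
    rcases eq_or_ne b [] with rfl | hb
    · exact Or.inl ⟨by simp, by rwa [flattenWS_nil_cons, hS.flattenWS_eq] at h⟩
    · exact Or.inr ⟨b, rfl, by rwa [flattenWS_cons_of_ne_nil hb, hS.flattenWS_eq] at h⟩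

lemma Refines.flatten_eq {Q S : Sentence A} (h : Refines Q S) : Q.flatten = S.flatten := by
  obtain ⟨P, -, rfl, rfl⟩ := h
  exact List.flatten_flatten

lemma finite_isSentence_flatten_eq (w : List A) :
    {Q : Sentence A | IsSentence Q ∧ Q.flatten = w}.Finite := by
  refine (Set.finite_range fun c : Composition w.length => w.splitWrtComposition c).subset ?_
  rintro Q ⟨hQ, rfl⟩
  let c : Composition Q.flatten.length :=
    { blocks := Q.map List.length
      blocks_pos := by
        simp only [List.mem_map, forall_exists_index, and_imp, forall_apply_eq_imp_iff₂]
        exact fun q hq => List.length_pos_iff.2 (hQ q hq)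
      blocks_sum := List.length_flatten.symm }
  exact ⟨c, List.splitWrtComposition_flatten Q c rfl⟩

lemma finite_refinements (S : Sentence A) : {Q : Sentence A | IsSentence Q ∧ Refines Q S}.Finite :=
  (finite_isSentence_flatten_eq S.flatten).subset fun _ hQ => ⟨hQ.1, hQ.2.flatten_eq⟩

/-- The sentences `Q ⪯ S` refining `S`. -/
noncomputable def refinements (S : Sentence A) : Finset (Sentence A) :=
  (finite_refinements S).toFinset

@[simp] lemma mem_refinements {Q S : Sentence A} :
    Q ∈ refinements S ↔ IsSentence Q ∧ Refines Q S := by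
  simp [refinements]

lemma refinements_nil : refinements ([] : Sentence A) = {[]} := by
  ext Q
  simp +contextual [refines_nil_right]

lemma sum_refinements_cons {M : Type*} [AddCommMonoid M] {k : List A} {S : Sentence A}
    (hS : IsSentence (k :: S)) (f : Sentence A → M) :
    ∑ Q ∈ refinements (k :: S), f Q =
      ∑ y ∈ wordSplits k with y.1 ≠ [], ∑ Q ∈ refinements (flattenWS (y.2 :: S)), f (y.1 :: Q) := by
  rw [Finset.sum_sigma']
  symm
  refine Finset.sum_bij (fun p _ => p.1.1 :: p.2) ?_ ?_ ?_ fun _ _ => rfl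
  · rintro ⟨⟨q, b⟩, Q⟩ h
    simp only [Finset.mem_sigma, Finset.mem_filter, mem_wordSplits, mem_refinements] at h ⊢
    obtain ⟨⟨hk, hq⟩, hQ, hQS⟩ := h
    exact ⟨isSentence_cons.2 ⟨hq, hQ⟩,
      (hQ.refines_cons_cons (isSentence_cons.1 hS).2).2 ⟨b, hk, hQS⟩⟩
  · rintro ⟨⟨q, b⟩, Q⟩ h ⟨⟨q', b'⟩, Q'⟩ h' heq
    simp only [Finset.mem_sigma, Finset.mem_filter, mem_wordSplits] at h h'
    obtain ⟨rfl, rfl⟩ := List.cons.inj heq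
    obtain rfl : b = b' := List.append_cancel_left (h.1.1.trans h'.1.1.symm)
    rfl
  · rintro (_ | ⟨q, Q⟩) h
    · exact absurd (mem_refinements.1 h).2 (not_refines_nil_cons k S)
    · obtain ⟨hqQ, href⟩ := mem_refinements.1 h
      obtain ⟨hq, hQ⟩ := isSentence_cons.1 hqQ
      obtain ⟨b, hk, hQS⟩ := (hQ.refines_cons_cons (isSentence_cons.1 hS).2).1 href
      refine ⟨⟨(q, b), Q⟩, ?_, rfl⟩
      simp only [Finset.mem_sigma, Finset.mem_filter, mem_wordSplits, mem_refinements]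
      exact ⟨⟨hk, hq⟩, hQ, hQS⟩

/-- The signed sum `∑_{Q ⪯ S} (-1)^{ℓ(Q)} g(w(Qʳ) · r)`, in which the inner sum of the Bernstein
operator is absorbed. -/
noncomputable def signedRefinementSum {R : Type*} [Ring R] (g : List A → R) (r : List A)
    (S : Sentence A) : R :=
  ∑ Q ∈ refinements S, (-1) ^ Q.length * g (Q.reverse.flatten ++ r)

lemma signedRefinementSum_cons {R : Type*} [Ring R] (g : List A → R) (r : List A) {k : List A}
    {S : Sentence A} (hS : IsSentence (k :: S)) :
    signedRefinementSum g r (k :: S) =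
      -∑ y ∈ wordSplits k with y.1 ≠ [],
        signedRefinementSum g (y.1 ++ r) (flattenWS (y.2 :: S)) := by
  simp only [signedRefinementSum, sum_refinements_cons hS, ← Finset.sum_neg_distrib]
  simp [pow_succ]

/-- The refinements of `k :: S` cancel against those obtained by moving a proper prefix of `k`
into `r`. -/
lemma sum_wordSplits_signedRefinementSum {R : Type*} [Ring R] (g : List A → R) (r : List A)
    {k : List A} {S : Sentence A} (hS : IsSentence (k :: S)) :
    ∑ y ∈ wordSplits k, signedRefinementSum g (y.1 ++ r) (flattenWS (y.2 :: S)) = 0 := by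
  have hempty : {y ∈ wordSplits k | y.1 = []} = {([], k)} := by
    ext ⟨a, b⟩
    simp +contextual [mem_wordSplits, and_comm]
  rw [← Finset.sum_filter_add_sum_filter_not _ fun y => y.1 = [], hempty, Finset.sum_singleton,
    hS.flattenWS_eq, List.nil_append, signedRefinementSum_cons g r hS, neg_add_cancel]

lemma sum_splits_signedRefinementSum {R : Type*} [Ring R] (g : List A → R) (L : Sentence A) :
    ∑ x ∈ splits L, signedRefinementSum g x.1.flatten (flattenWS x.2) =
      if flattenWS L = [] then g [] else 0 := by
  induction L with
  | nil => simp [sum_splits_nil, signedRefinementSum, refinements_nil]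
  | cons k L ih =>
    rcases eq_or_ne k [] with rfl | hk
    · simp only [sum_splits_cons, wordSplits_nil, Finset.sum_singleton]
      exact ih
    · rw [sum_splits_cons, flattenWS_cons_of_ne_nil hk, if_neg (List.cons_ne_nil _ _)]
      refine Finset.sum_eq_zero fun x _ => ?_
      rw [← sum_wordSplits_signedRefinementSum g x.1.flatten
        (isSentence_cons.2 ⟨hk, isSentence_flattenWS x.2⟩)]
      simp only [flattenWS_cons_flattenWS, List.flatten_cons]

/-! ### Colored immaculate tableaux -/

lemma rowWith_cons_cons (a : A) (w : List A) (b : ℕ) (row : List ℕ) (x : ℕ) :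
    rowWith (a :: w) (b :: row) x = if b = x then a :: rowWith w row x else rowWith w row x := by
  simp only [rowWith, List.zip_cons_cons, List.filter_cons, beq_iff_eq]
  split_ifs <;> rfl

lemma rowWith_append {w : List A} {row : List ℕ} (h : w.length = row.length) (w' : List A)
    (row' : List ℕ) (x : ℕ) :
    rowWith (w ++ w') (row ++ row') x = rowWith w row x ++ rowWith w' row' x := by
  simp [rowWith, List.zip_append h]

lemma rowWith_replicate (w : List A) (b x : ℕ) :
    rowWith w (List.replicate w.length b) x = if b = x then w else [] := by
  induction w with
  | nil => simp [rowWith]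
  | cons a w ih => simp only [List.length_cons, List.replicate_succ, rowWith_cons_cons, ih]; aesop

lemma rowWith_eq_nil_iff {w : List A} {row : List ℕ} (h : row.length = w.length) {x : ℕ} :
    rowWith w row x = [] ↔ x ∉ row := by
  induction w generalizing row with
  | nil => simp_all [rowWith]
  | cons a w ih =>
    cases row with
    | nil => simp at h
    | cons b row =>
      rw [rowWith_cons_cons, List.mem_cons]
      split_ifs with hb
      · simp [hb]
      · simp [ih (Nat.succ.inj h), Ne.symm hb]

lemma typeWord_cons_cons (w : List A) (J : Sentence A) (row : List ℕ) (f : Filling) (x : ℕ) :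
    typeWord (w :: J) (row :: f) x = typeWord J f x ++ rowWith w row x := by
  simp [typeWord]

lemma typeWord_eq_nil_iff {J : Sentence A} {f : Filling}
    (h : f.map List.length = J.map List.length) {x : ℕ} :
    typeWord J f x = [] ↔ x ∉ f.flatten := by
  induction J generalizing f with
  | nil => simp_all [typeWord]
  | cons w J ih =>
    cases f with
    | nil => simp at h
    | cons row f =>
      obtain ⟨hrow, hf⟩ := List.cons.inj h
      simp [typeWord_cons_cons, rowWith_eq_nil_iff hrow, ih hf, and_comm]

lemma isCIT_iff_pairwise {J : Sentence A} {f : Filling} :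
    IsCIT J f ↔ f.map List.length = J.map List.length ∧ (∀ row ∈ f, row.Pairwise (· ≤ ·)) ∧
      (f.filterMap List.head?).Pairwise (· < ·) ∧ ∀ x ∈ f.flatten, 1 ≤ x :=
  and_congr_right' <| and_congr (forall₂_congr fun _ _ => List.isChain_iff_pairwise) <|
    and_congr_left' List.isChain_iff_pairwise

lemma isCIT_nil_iff {f : Filling} : IsCIT ([] : Sentence A) f ↔ f = [] := by
  refine isCIT_iff_pairwise.trans ⟨fun h => by simpa using h.1, ?_⟩
  rintro rfl
  simp

lemma forall_head_lt_iff {b : ℕ} {f : Filling} (hf : ∀ row ∈ f, row.Pairwise (· ≤ ·)) :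
    (∀ a ∈ f.filterMap List.head?, b < a) ↔ ∀ x ∈ f.flatten, b < x := by
  simp only [List.mem_filterMap, List.mem_flatten, forall_exists_index, and_imp]
  constructor
  · intro h x row hrow hx
    obtain ⟨a, row', rfl⟩ := List.exists_cons_of_ne_nil (List.ne_nil_of_mem hx)
    have ha : b < a := h a _ hrow rfl
    rcases List.mem_cons.1 hx with rfl | hx
    · exact ha
    · exact ha.trans_le ((List.pairwise_cons.1 (hf _ hrow)).1 x hx)
  · exact fun h a row hrow ha => h a row hrow (List.mem_of_mem_head? ha)

lemma isCIT_cons_cons {v : List A} {J : Sentence A} {b : ℕ} {row : List ℕ} {f : Filling} :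
    IsCIT (v :: J) ((b :: row) :: f) ↔
      (b :: row).length = v.length ∧ (b :: row).Pairwise (· ≤ ·) ∧ 1 ≤ b ∧ IsCIT J f ∧
        ∀ x ∈ f.flatten, b < x := by
  have hrow (hb : 1 ≤ b) (hsort : (b :: row).Pairwise (· ≤ ·)) : ∀ x ∈ row, 1 ≤ x :=
    fun x hx => hb.trans ((List.pairwise_cons.1 hsort).1 x hx)
  simp only [isCIT_iff_pairwise, List.map_cons, List.cons.injEq, List.forall_mem_cons,
    List.filterMap_cons, List.head?_cons, List.flatten_cons, List.forall_mem_append,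
    List.pairwise_cons (a := b) (l := List.filterMap _ _)]
  constructor
  · rintro ⟨⟨hlen, hshape⟩, ⟨hsort, hf⟩, ⟨hhead, hcol⟩, ⟨hb, -⟩, hpos⟩
    exact ⟨hlen, hsort, hb, ⟨hshape, hf, hcol, hpos⟩, (forall_head_lt_iff hf).1 hhead⟩
  · rintro ⟨hlen, hsort, hb, ⟨hshape, hf, hcol, hpos⟩, hlt⟩
    exact ⟨⟨hlen, hshape⟩, ⟨hsort, hf⟩, ⟨(forall_head_lt_iff hf).2 hlt, hcol⟩,
      ⟨hb, hrow hb hsort⟩, hpos⟩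

/-- The row carrying the word `s.flatten` in which the letters of the `i`-th word of `s`
(counting from `0`) have the entry `n + i`. -/
def contentRow (n : ℕ) : Sentence A → List ℕ
  | [] => []
  | w :: s => List.replicate w.length n ++ contentRow (n + 1) s

lemma length_contentRow (n : ℕ) (s : Sentence A) :
    (contentRow n s).length = s.flatten.length := by
  induction s generalizing n with
  | nil => rfl
  | cons w s ih => simp [contentRow, ih]

lemma le_of_mem_contentRow {n x : ℕ} {s : Sentence A} (hx : x ∈ contentRow n s) : n ≤ x := by
  induction s generalizing n with
  | nil => simp [contentRow] at hx
  | cons w s ih =>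
    rcases List.mem_append.1 hx with hx | hx
    · exact (List.eq_of_mem_replicate hx).ge
    · exact Nat.le_of_succ_le (ih hx)

lemma pairwise_contentRow (n : ℕ) (s : Sentence A) : (contentRow n s).Pairwise (· ≤ ·) := by
  induction s generalizing n with
  | nil => exact List.Pairwise.nil
  | cons w s ih =>
    refine List.pairwise_append.2 ⟨List.pairwise_replicate.2 (Or.inr le_rfl), ih _, ?_⟩
    intro x hx y hy
    rw [List.eq_of_mem_replicate hx]
    exact Nat.le_of_succ_le (le_of_mem_contentRow hy)

lemma rowWith_contentRow (n i : ℕ) (s : Sentence A) :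
    rowWith s.flatten (contentRow n s) (n + i) = s.getD i [] := by
  induction s generalizing n i with
  | nil => simp [contentRow, rowWith]
  | cons w s ih =>
    rw [List.flatten_cons, contentRow, rowWith_append List.length_replicate.symm, rowWith_replicate]
    cases i with
    | zero =>
      have hn : n ∉ contentRow (n + 1) s := fun h => by
        have := le_of_mem_contentRow h
        omega
      simp [(rowWith_eq_nil_iff (length_contentRow (n + 1) s)).2 hn]
    | succ i => simpa [Nat.add_right_comm, Nat.add_assoc] using ih (n + 1) i

lemma contentRow_injective {n : ℕ} {s t : Sentence A} (hlen : s.length = t.length)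
    (hflat : s.flatten = t.flatten) (h : contentRow n s = contentRow n t) : s = t := by
  refine List.ext_getElem hlen fun i hs ht => ?_
  rw [← List.getD_eq_getElem s [] hs, ← List.getD_eq_getElem t [] ht, ← rowWith_contentRow n,
    ← rowWith_contentRow n, hflat, h]

lemma exists_contentRow_eq {n m : ℕ} {v : List A} {row : List ℕ} (hlen : row.length = v.length)
    (hsort : row.Pairwise (· ≤ ·)) (hrow : ∀ x ∈ row, n ≤ x ∧ x < n + m) :
    ∃ s : Sentence A, s.length = m ∧ s.flatten = v ∧ contentRow n s = row := by
  induction m generalizing n v row with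
  | zero =>
    obtain rfl : row = [] := List.eq_nil_iff_forall_not_mem.2 fun x hx => by
      have := hrow x hx
      omega
    exact ⟨[], rfl, (List.length_eq_zero_iff.1 hlen.symm).symm, rfl⟩
  | succ m ihm =>
    have hskip {v : List A} {row : List ℕ} (hlen : row.length = v.length)
        (hsort : row.Pairwise (· ≤ ·)) (hrow : ∀ x ∈ row, n + 1 ≤ x ∧ x < n + 1 + m) :
        ∃ s : Sentence A, s.length = m + 1 ∧ s.flatten = v ∧ contentRow n s = row := by
      obtain ⟨s, rfl, hv, hr⟩ := ihm hlen hsort hrow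
      exact ⟨[] :: s, rfl, hv, hr⟩
    induction row generalizing v with
    | nil => exact hskip hlen hsort (by simp)
    | cons b row ih =>
      obtain ⟨a, v, rfl⟩ := List.exists_cons_of_length_eq_add_one hlen.symm
      obtain ⟨hb, hsort'⟩ := List.pairwise_cons.1 hsort
      obtain ⟨⟨hnb, hbm⟩, hrow'⟩ := List.forall_mem_cons.1 hrow
      rcases hnb.eq_or_lt with rfl | hnb
      · obtain ⟨_ | ⟨w, s⟩, hs, rfl, rfl⟩ := ih (Nat.succ.inj hlen) hsort' hrow'
        · simp at hs
        · exact ⟨(a :: w) :: s, hs, rfl, rfl⟩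
      · refine hskip hlen hsort (List.forall_mem_cons.2 ⟨by omega, fun x hx => ?_⟩)
        have hbx := hb x hx
        have hxm := (hrow' x hx).2
        omega

/-! ### Counting tableaux row by row -/

lemma mem_splits_iff_getD {L : Sentence A} {x : Sentence A × Sentence A} :
    x ∈ splits L ↔ x.1.length = L.length ∧ x.2.length = L.length ∧
      ∀ i, x.1.getD i [] ++ x.2.getD i [] = L.getD i [] := by
  refine ⟨fun hx => ⟨length_fst_of_mem_splits hx, length_snd_of_mem_splits hx, fun i => ?_⟩,
    fun ⟨h₁, h₂, h⟩ => mem_splits.2 ⟨h₁.trans h₂.symm, ?_⟩⟩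
  · obtain ⟨hlen, rfl⟩ := mem_splits.1 hx
    by_cases hi : i < x.1.length <;> simp [List.getD_eq_getElem?_getD, hi, hlen ▸ hi]
  · refine List.ext_getElem (by simp [h₁, h₂]) fun i hi hiL => ?_
    have := h i
    rw [List.getD_eq_getElem _ _ (h₁ ▸ hiL), List.getD_eq_getElem _ _ (h₂ ▸ hiL),
      List.getD_eq_getElem _ _ hiL] at this
    simpa using this

lemma eq_of_mem_splits_of_snd_eq {L : Sentence A} {x y : Sentence A × Sentence A}
    (hx : x ∈ splits L) (hy : y ∈ splits L) (h : x.2 = y.2) : x = y := by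
  obtain ⟨hxlen, -, hxL⟩ := mem_splits_iff_getD.1 hx
  obtain ⟨hylen, -, hyL⟩ := mem_splits_iff_getD.1 hy
  refine Prod.ext (List.ext_getElem (hxlen.trans hylen.symm) fun i hix hiy => ?_) h
  rw [← List.getD_eq_getElem x.1 [] hix, ← List.getD_eq_getElem y.1 [] hiy]
  exact List.append_cancel_right ((hxL i).trans (h ▸ (hyL i).symm))

lemma flattenWS_eq_nil_iff_getD {B : Sentence A} : flattenWS B = [] ↔ ∀ i, B.getD i [] = [] := by
  induction B with
  | nil => simp
  | cons w B ih =>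
    have hcons : flattenWS (w :: B) = [] ↔ w = [] ∧ flattenWS B = [] := by
      rcases eq_or_ne w [] with rfl | hw
      · simp
      · simp [flattenWS_cons_of_ne_nil hw, hw]
    rw [hcons, ih]
    refine ⟨?_, fun h => ⟨h 0, fun i => h (i + 1)⟩⟩
    rintro ⟨rfl, hB⟩ (_ | i)
    exacts [rfl, hB i]

/-- The colored immaculate tableaux of shape `J` with entries greater than `n` in which the colors
of the boxes with entry `n + 1 + i` form the `i`-th word of `B`, counting from `0`.  For `n = 0`
these are the tableaux of type `B`; the offset `n` describes what is left of such a tableau once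
its upper rows are removed. -/
def tableauxAbove (n : ℕ) (J B : Sentence A) : Set Filling :=
  {f | IsCIT J f ∧ (∀ x ∈ f.flatten, n < x) ∧ ∀ i, typeWord J f (n + 1 + i) = B.getD i []}

lemma KJB_eq_ncard_tableauxAbove (J B : Sentence A) : KJB J B = (tableauxAbove 0 J B).ncard := by
  refine congrArg Set.ncard (Set.ext fun f => and_congr_right fun hf => ?_)
  constructor
  · exact fun h => ⟨hf.2.2.2, fun i => by simpa [Nat.add_comm 1] using h (i + 1) (by omega)⟩
  · rintro ⟨-, h⟩ x hx
    simpa [Nat.add_sub_cancel' hx] using h (x - 1)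

lemma mem_tableauxAbove_nil {n : ℕ} {B : Sentence A} {f : Filling} :
    f ∈ tableauxAbove n [] B ↔ f = [] ∧ flattenWS B = [] := by
  refine (and_congr_left' isCIT_nil_iff).trans (and_congr_right ?_)
  rintro rfl
  rw [flattenWS_eq_nil_iff_getD]
  exact ⟨fun h i => (h.2 i).symm, fun h => ⟨by simp, fun i => (h i).symm⟩⟩

lemma ncard_tableauxAbove_nil (n : ℕ) (B : Sentence A) :
    (tableauxAbove n [] B).ncard = if flattenWS B = [] then 1 else 0 := by
  rw [show tableauxAbove n [] B = {f | f = [] ∧ flattenWS B = []} from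
    Set.ext fun _ => mem_tableauxAbove_nil]
  split_ifs with h <;> simp [h]

lemma typeWord_eq_nil_of_forall_lt {J : Sentence A} {f : Filling} (hf : IsCIT J f) {n : ℕ}
    (hlt : ∀ x ∈ f.flatten, n < x) : typeWord J f n = [] :=
  (typeWord_eq_nil_iff hf.1).2 fun h => (hlt n h).false

lemma tableauxAbove_nil_cons (n : ℕ) (J B : Sentence A) :
    tableauxAbove n J ([] :: B) = tableauxAbove (n + 1) J B := by
  ext f
  have hshift (i : ℕ) : n + 1 + (i + 1) = n + 1 + 1 + i := by omega
  refine and_congr_right fun hf => ⟨fun ⟨hlt, htype⟩ => ⟨fun x hx => ?_, fun i => ?_⟩,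
    fun ⟨hlt, htype⟩ => ⟨fun x hx => Nat.lt_of_succ_lt (hlt x hx), fun i => ?_⟩⟩
  · refine lt_of_le_of_ne (hlt x hx) ?_
    rintro rfl
    exact (typeWord_eq_nil_iff hf.1).1 (htype 0) hx
  · exact hshift i ▸ htype (i + 1)
  · cases i with
    | zero => exact typeWord_eq_nil_of_forall_lt hf hlt
    | succ i => exact (hshift i).symm ▸ htype i

lemma lt_add_length_of_mem_tableauxAbove {n : ℕ} {J B : Sentence A} {f : Filling}
    (hf : f ∈ tableauxAbove n J B) {x : ℕ} (hx : x ∈ f.flatten) : x < n + 1 + B.length := by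
  obtain ⟨hcit, hlt, htype⟩ := hf
  by_contra! hle
  have := htype (x - (n + 1))
  rw [Nat.add_sub_cancel' (hlt x hx), List.getD_eq_default _ _ (by omega)] at this
  exact (typeWord_eq_nil_iff hcit.1).1 this hx

lemma tableauxAbove_cons_nil (n : ℕ) {v : List A} (hv : v ≠ []) (J : Sentence A) :
    tableauxAbove n (v :: J) [] = ∅ := by
  refine Set.eq_empty_of_forall_notMem fun f hf => ?_
  obtain _ | ⟨_ | ⟨b, row⟩, f⟩ := f
  · simpa using hf.1.1
  · exact hv (List.length_eq_zero_iff.1 (List.cons.inj hf.1.1).1.symm)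
  · have hb : b ∈ ((b :: row) :: f).flatten := by simp
    have := hf.2.1 b hb
    have := lt_add_length_of_mem_tableauxAbove hf hb
    simp only [List.length_nil] at this
    omega

lemma contentRow_cons_mem_tableauxAbove {n : ℕ} {w : List A} (hw : w ≠ []) {J B : Sentence A}
    {x : Sentence A × Sentence A} (hx : x ∈ splits B) {f : Filling}
    (hf : f ∈ tableauxAbove (n + 1) J x.1) :
    contentRow (n + 1) (w :: x.2) :: f ∈ tableauxAbove n ((w ++ x.2.flatten) :: J) (w :: B) := by
  obtain ⟨hcit, hlt, htype⟩ := hf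
  obtain ⟨a, w, rfl⟩ := List.exists_cons_of_ne_nil hw
  refine ⟨?_, ?_, fun i => ?_⟩
  · exact isCIT_cons_cons.2 ⟨length_contentRow (n + 1) ((a :: w) :: x.2),
      pairwise_contentRow (n + 1) ((a :: w) :: x.2), Nat.le_add_left 1 n, hcit, hlt⟩
  · rw [List.flatten_cons, List.forall_mem_append]
    exact ⟨fun y hy => le_of_mem_contentRow hy, fun y hy => Nat.lt_of_succ_lt (hlt y hy)⟩
  · rw [typeWord_cons_cons]
    refine (congrArg _ (rowWith_contentRow (n + 1) i ((a :: w) :: x.2))).trans ?_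
    cases i with
    | zero => simp [typeWord_eq_nil_of_forall_lt hcit hlt]
    | succ i =>
      rw [List.getD_cons_succ, List.getD_cons_succ, ← (mem_splits_iff_getD.1 hx).2.2 i, ← htype i]
      congr 2
      omega

lemma corner_eq_of_mem_tableauxAbove {n b : ℕ} {v w : List A} (hw : w ≠ []) {J B : Sentence A}
    {row : List ℕ} {f : Filling} (hf : (b :: row) :: f ∈ tableauxAbove n (v :: J) (w :: B)) :
    b = n + 1 := by
  obtain ⟨hcit, hlt, htype⟩ := hf
  obtain ⟨-, hsort, -, -, hbf⟩ := isCIT_cons_cons.1 hcit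
  have hnb : n < b := hlt b (by simp)
  have hmem : n + 1 ∈ ((b :: row) :: f).flatten := by
    by_contra h
    exact hw ((htype 0).symm.trans ((typeWord_eq_nil_iff hcit.1).2 h))
  rw [List.flatten_cons, List.cons_append, List.mem_cons, List.mem_append] at hmem
  rcases hmem with h | h | h
  · exact h.symm
  · have := (List.pairwise_cons.1 hsort).1 _ h
    omega
  · have := hbf _ h
    omega

lemma exists_splits_of_append_getD_eq {s B : Sentence A} (hs : s.length = B.length)
    {t : ℕ → List A} (h : ∀ i, t i ++ s.getD i [] = B.getD i []) :
    ∃ p, (p, s) ∈ splits B ∧ ∀ i, p.getD i [] = t i := by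
  have hp (i : ℕ) : ((List.range B.length).map t).getD i [] = t i := by
    by_cases hi : i < B.length
    · simp [hi]
    · have := h i
      rw [List.getD_eq_default _ _ (not_lt.1 hi)] at this
      simp [hi, (List.append_eq_nil_iff.1 this).1]
  exact ⟨(List.range B.length).map t, mem_splits_iff_getD.2 ⟨by simp, hs, fun i => hp i ▸ h i⟩, hp⟩

lemma exists_eq_contentRow_cons_of_mem_tableauxAbove {n : ℕ} {v w : List A} (hv : v ≠ [])
    (hw : w ≠ []) {J B : Sentence A} {f : Filling} (hf : f ∈ tableauxAbove n (v :: J) (w :: B)) :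
    ∃ x ∈ splits B, w ++ x.2.flatten = v ∧
      ∃ f' ∈ tableauxAbove (n + 1) J x.1, contentRow (n + 1) (w :: x.2) :: f' = f := by
  obtain _ | ⟨_ | ⟨b, row⟩, f⟩ := f
  · simpa using hf.1.1
  · exact absurd (List.length_eq_zero_iff.1 (List.cons.inj hf.1.1).1.symm) hv
  have hbound {x : ℕ} (hx : x ∈ b :: row) : n + 1 ≤ x ∧ x < n + 1 + (B.length + 1) :=
    have hx' : x ∈ ((b :: row) :: f).flatten := List.mem_append_left _ hx
    ⟨hf.2.1 x hx', lt_add_length_of_mem_tableauxAbove hf hx'⟩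
  have hb : b = n + 1 := corner_eq_of_mem_tableauxAbove hw hf
  obtain ⟨hcit, -, htype⟩ := hf
  obtain ⟨hlen, hsort, -, hcit', hbf⟩ := isCIT_cons_cons.1 hcit
  obtain ⟨_ | ⟨w', s⟩, hs, rfl, hrow⟩ := exists_contentRow_eq hlen hsort fun _ => hbound
  · simp at hs
  have htype' (i : ℕ) : typeWord J f (n + 1 + i) ++ (w' :: s).getD i [] = (w :: B).getD i [] := by
    rw [← htype i, typeWord_cons_cons, ← hrow, rowWith_contentRow]
  obtain rfl : w' = w := by
    simpa [typeWord_eq_nil_of_forall_lt hcit' (hb ▸ hbf)] using htype' 0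
  obtain ⟨p, hp, hpt⟩ := exists_splits_of_append_getD_eq (Nat.succ.inj hs) fun i => htype' (i + 1)
  refine ⟨(p, s), hp, rfl, f, ⟨hcit', hb ▸ hbf, fun i => ?_⟩, by rw [hrow]⟩
  rw [hpt i, Nat.add_right_comm, Nat.add_assoc]

lemma tableauxAbove_cons_cons {n : ℕ} {v w : List A} (hv : v ≠ []) (hw : w ≠ [])
    (J B : Sentence A) :
    tableauxAbove n (v :: J) (w :: B) =
      ⋃ x ∈ {x | x ∈ splits B ∧ w ++ x.2.flatten = v},
        (contentRow (n + 1) (w :: x.2) :: ·) '' tableauxAbove (n + 1) J x.1 := by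
  ext f
  simp only [Set.mem_iUnion, Set.mem_image, exists_prop]
  constructor
  · intro hf
    obtain ⟨x, hx, hv', hf'⟩ := exists_eq_contentRow_cons_of_mem_tableauxAbove hv hw hf
    exact ⟨x, ⟨hx, hv'⟩, hf'⟩
  · rintro ⟨x, ⟨hx, rfl⟩, f', hf', rfl⟩
    exact contentRow_cons_mem_tableauxAbove hw hx hf'

lemma finite_tableauxAbove (n : ℕ) {J : Sentence A} (hJ : IsSentence J) (B : Sentence A) :
    (tableauxAbove n J B).Finite := by
  induction J generalizing n B with
  | nil => exact (Set.finite_singleton []).subset fun _ hf => (mem_tableauxAbove_nil.1 hf).1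
  | cons v J ihJ =>
    obtain ⟨hv, hJ⟩ := isSentence_cons.1 hJ
    induction B generalizing n with
    | nil => simp [tableauxAbove_cons_nil n hv]
    | cons w B ihB =>
      rcases eq_or_ne w [] with rfl | hw
      · exact tableauxAbove_nil_cons n (v :: J) B ▸ ihB (n + 1)
      · rw [tableauxAbove_cons_cons hv hw]
        exact ((splits B).finite_toSet.subset fun x hx => hx.1).biUnion fun x _ =>
          (ihJ (n + 1) hJ x.1).image _

open Classical in
lemma ncard_tableauxAbove_cons_cons (n : ℕ) {v w : List A} (hw : w ≠ []) {J : Sentence A}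
    (hJ : IsSentence (v :: J)) (B : Sentence A) :
    (tableauxAbove n (v :: J) (w :: B)).ncard =
      ∑ x ∈ splits B, if w ++ x.2.flatten = v then (tableauxAbove (n + 1) J x.1).ncard else 0 := by
  obtain ⟨hv, hJ⟩ := isSentence_cons.1 hJ
  have hset : {x | x ∈ splits B ∧ w ++ x.2.flatten = v} =
      ↑{x ∈ splits B | w ++ x.2.flatten = v} := by
    ext x
    simp
  rw [tableauxAbove_cons_cons hv hw, hset, Set.Finite.ncard_biUnion (Finset.finite_toSet _),
    finsum_mem_coe_finset, Finset.sum_filter]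
  · simp only [Set.ncard_image_of_injective _ List.cons_injective]
  · exact fun x _ => (finite_tableauxAbove (n + 1) hJ x.1).image _
  · intro x hx y hy hne
    obtain ⟨hxB, hxv⟩ := Finset.mem_filter.1 hx
    obtain ⟨hyB, hyv⟩ := Finset.mem_filter.1 hy
    refine Set.disjoint_left.2 ?_
    rintro _ ⟨f, -, rfl⟩ ⟨g, -, hfg⟩
    have hlen : (w :: x.2).length = (w :: y.2).length := by
      simp [length_snd_of_mem_splits hxB, length_snd_of_mem_splits hyB]
    have hrow : w :: x.2 = w :: y.2 :=
      contentRow_injective hlen (hxv.trans hyv.symm) (List.cons.inj hfg).1.symm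
    exact hne (eq_of_mem_splits_of_snd_eq hxB hyB (List.cons.inj hrow).2)

lemma ncard_tableauxAbove_flattenWS (n n' : ℕ) {J : Sentence A} (hJ : IsSentence J)
    (B : Sentence A) :
    (tableauxAbove n J (flattenWS B)).ncard = (tableauxAbove n' J B).ncard := by
  classical
  induction J generalizing n n' B with
  | nil =>
    rw [ncard_tableauxAbove_nil, ncard_tableauxAbove_nil, (isSentence_flattenWS B).flattenWS_eq]
  | cons v J ihJ =>
    obtain ⟨hv, hJ'⟩ := isSentence_cons.1 hJ
    induction B generalizing n' with
    | nil => simp [tableauxAbove_cons_nil _ hv]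
    | cons w B ihB =>
      rcases eq_or_ne w [] with rfl | hw
      · rw [flattenWS_nil_cons, tableauxAbove_nil_cons, ihB]
      · have hflat (m : ℕ) (L : Sentence A) :
            (tableauxAbove m J L).ncard = (tableauxAbove 0 J (flattenWS L)).ncard :=
          (ihJ 0 m hJ' L).symm
        rw [flattenWS_cons_of_ne_nil hw, ncard_tableauxAbove_cons_cons n hw hJ,
          ncard_tableauxAbove_cons_cons n' hw hJ]
        calc
          _ = ∑ x ∈ splits (flattenWS B), if w ++ x.2.flatten = v then
                (tableauxAbove 0 J (flattenWS x.1)).ncard else 0 :=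
            Finset.sum_congr rfl fun x _ => by rw [hflat]
          _ = ∑ x ∈ splits B, if w ++ x.2.flatten = v then
                (tableauxAbove 0 J (flattenWS x.1)).ncard else 0 :=
            sum_splits_flattenWS B fun L u =>
              if w ++ u = v then (tableauxAbove 0 J L).ncard else 0
          _ = _ := Finset.sum_congr rfl fun x _ => by rw [hflat (n' + 1)]

lemma ncard_tableauxAbove_eq_KJB (n : ℕ) {J : Sentence A} (hJ : IsSentence J) (B : Sentence A) :
    (tableauxAbove n J B).ncard = KJB J B := by
  rw [KJB_eq_ncard_tableauxAbove, ← ncard_tableauxAbove_flattenWS 0 n hJ,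
    ncard_tableauxAbove_flattenWS 0 0 hJ]

lemma KJB_flattenWS {J : Sentence A} (hJ : IsSentence J) (B : Sentence A) :
    KJB J (flattenWS B) = KJB J B := by
  simp only [KJB_eq_ncard_tableauxAbove, ncard_tableauxAbove_flattenWS 0 0 hJ]

lemma KJB_nil (B : Sentence A) : KJB [] B = if flattenWS B = [] then 1 else 0 := by
  rw [KJB_eq_ncard_tableauxAbove, ncard_tableauxAbove_nil]

lemma KJB_cons_nil {v : List A} (hv : v ≠ []) (J : Sentence A) : KJB (v :: J) [] = 0 := by
  rw [KJB_eq_ncard_tableauxAbove, tableauxAbove_cons_nil 0 hv, Set.ncard_empty]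

open Classical in
lemma KJB_cons_cons {v w : List A} (hw : w ≠ []) {J : Sentence A} (hJ : IsSentence (v :: J))
    (B : Sentence A) :
    KJB (v :: J) (w :: B) = ∑ x ∈ splits B, if w ++ x.2.flatten = v then KJB J x.1 else 0 := by
  rw [KJB_eq_ncard_tableauxAbove, ncard_tableauxAbove_cons_cons 0 hw hJ]
  simp only [ncard_tableauxAbove_eq_KJB _ (isSentence_cons.1 hJ).2]

/-! ### Coefficients of dual immaculate functions -/

lemma pairwise_snd_monoOf (J : Sentence A) (f : Filling) :
    (monoOf J f).2.Pairwise (· < ·) :=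
  (List.pairwise_map.2 <| List.pairwise_lt_range.imp Nat.succ_lt_succ).filter _

lemma le_maxEntry {f : Filling} {x : ℕ} (hx : x ∈ f.flatten) : x ≤ maxEntry f :=
  List.le_max_of_le hx le_rfl

lemma mem_snd_monoOf {J : Sentence A} {f : Filling} (hf : f.map List.length = J.map List.length)
    {x : ℕ} : x ∈ (monoOf J f).2 ↔ 1 ≤ x ∧ typeWord J f x ≠ [] := by
  simp only [monoOf, List.mem_filter, List.mem_map, List.mem_range, Bool.not_eq_true',
    List.isEmpty_eq_false_iff]
  refine and_congr_left fun hx => ⟨?_, fun h => ⟨x - 1, ?_, Nat.sub_add_cancel h⟩⟩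
  · rintro ⟨i, -, rfl⟩
    exact Nat.le_add_left 1 i
  · have := le_maxEntry (not_not.1 (mt (typeWord_eq_nil_iff hf).2 hx))
    omega

lemma map_range'_eq_iff {K : Sentence A} {t : ℕ → List A} :
    (List.range' 1 K.length).map t = K ↔ ∀ i < K.length, t (i + 1) = K.getD i [] := by
  refine ⟨fun h i hi => ?_, fun h => List.ext_getElem (by simp) fun i _ hi => ?_⟩
  · conv_rhs => rw [← h]
    simp [hi, Nat.add_comm]
  · simpa [hi, Nat.add_comm] using h i hi

lemma monoOf_eq_iff_hasType {J K : Sentence A} (hK : IsSentence K) {f : Filling}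
    (hf : f.map List.length = J.map List.length) :
    monoOf J f = (K, List.range' 1 K.length) ↔ HasType J f K := by
  have hmem {x : ℕ} : x ∈ List.range' 1 K.length ↔ 1 ≤ x ∧ K.getD (x - 1) [] ≠ [] := by
    rw [List.mem_range'_1]
    refine and_congr_right fun hx => ⟨fun h => ?_, fun h => ?_⟩
    · rw [List.getD_eq_getElem _ _ (by omega)]
      exact hK _ (List.getElem_mem _)
    · by_contra! hle
      exact h (List.getD_eq_default _ _ (by omega))
  constructor
  · intro h x hx
    have hvals : (monoOf J f).2 = List.range' 1 K.length := congrArg Prod.snd h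
    have hword : (List.range' 1 K.length).map (typeWord J f) = K :=
      hvals ▸ congrArg Prod.fst h
    rcases lt_or_ge (x - 1) K.length with hlt | hge
    · simpa [Nat.sub_add_cancel hx] using map_range'_eq_iff.1 hword (x - 1) hlt
    · have hx' : x ∉ (monoOf J f).2 := by
        rw [hvals, List.mem_range'_1]
        omega
      rw [List.getD_eq_default _ _ hge]
      by_contra hne
      exact hx' ((mem_snd_monoOf hf).2 ⟨hx, hne⟩)
  · intro h
    have hvals : (monoOf J f).2 = List.range' 1 K.length := by
      refine (pairwise_snd_monoOf J f).eq_of_mem_iff List.pairwise_lt_range' fun x => ?_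
      rw [mem_snd_monoOf hf, hmem]
      exact and_congr_right fun hx => by rw [h x hx]
    refine Prod.ext ?_ hvals
    change (monoOf J f).2.map (typeWord J f) = K
    rw [hvals, map_range'_eq_iff]
    exact fun i _ => h (i + 1) (Nat.le_add_left 1 i)

lemma coeffM_dualImm (J : Sentence A) {K : Sentence A} (hK : IsSentence K) :
    coeffM (dualImm J) K = KJB J K := by
  simp only [coeffM, dualImm, KJB]
  exact congrArg (fun s => (Set.ncard s : ℚ)) <| Set.ext fun f =>
    and_congr_right fun hf => monoOf_eq_iff_hasType hK hf.1

/-! ### Pairing with Bernstein operators -/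

lemma sum_smul_Hd_apply {ι : Type*} (s : Finset ι) (c : ι → ℚ) (K : ι → Sentence A)
    (I : Sentence A) [∀ i, Decidable (K i = I)] :
    (∑ i ∈ s, c i • Hd (K i)) I = ∑ i ∈ s with K i = I, c i := by
  simp only [Finset.sum_apply, Pi.smul_apply, Hd, smul_eq_mul, mul_ite, mul_one, mul_zero,
    Finset.sum_filter, @eq_comm _ I]

lemma inNSym_sum_smul_Hd {ι : Type*} (s : Finset ι) (c : ι → ℚ) {K : ι → Sentence A}
    (hK : ∀ i ∈ s, IsSentence (K i)) : InNSym (∑ i ∈ s, c i • Hd (K i)) := by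
  classical
  have hmem {I : Sentence A} (hI : (∑ i ∈ s, c i • Hd (K i)) I ≠ 0) : ∃ i ∈ s, K i = I := by
    rw [sum_smul_Hd_apply] at hI
    obtain ⟨i, hi, -⟩ := Finset.exists_ne_zero_of_sum_ne_zero hI
    exact ⟨i, Finset.mem_filter.1 hi⟩
  constructor
  · refine (s.finite_toSet.image K).subset fun I hI => ?_
    exact hmem hI
  · rintro I hI
    obtain ⟨i, hi, rfl⟩ := hmem hI
    exact hK i hi

lemma InNSym.eq_sum_smul_Hd {f : NSymA A} (hf : InNSym f) :
    f = ∑ L ∈ hf.1.toFinset, f L • Hd L := by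
  classical
  ext I
  rw [sum_smul_Hd_apply, Finset.filter_eq']
  split_ifs with h
  · simp
  · simpa using h

lemma pairNQ_sum_smul_Hd {ι : Type*} (s : Finset ι) (c : ι → ℚ) {K : ι → Sentence A}
    (hK : ∀ i ∈ s, IsSentence (K i)) (F : QSymA A) :
    pairNQ (∑ i ∈ s, c i • Hd (K i)) F = ∑ i ∈ s, c i * coeffM F (K i) := by
  classical
  simp only [pairNQ, sum_smul_Hd_apply, Finset.sum_mul]
  rw [finsum_mem_sum_filter s (fun i => {K i}) _ fun i I => c i * F (I, List.range' 1 I.length)]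
  · simp [coeffM]
  · simp only [Finset.mem_singleton]
    rintro i hi I
    exact ⟨fun h => ⟨h ▸ hK i hi, h.symm⟩, fun h => h.2.symm⟩

lemma InNSym.pairNQ_eq_sum {f : NSymA A} (hf : InNSym f) (F : QSymA A) :
    pairNQ f F = ∑ L ∈ hf.1.toFinset, f L * coeffM F L := by
  conv_lhs => rw [hf.eq_sum_smul_Hd]
  exact pairNQ_sum_smul_Hd _ _ (fun L hL => hf.2 L (by simpa using hL)) F

lemma fst_restrictMono {p : Sentence A} {js : List ℕ} (h : p.length = js.length) :
    (restrictMono p js).1 = flattenWS p := by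
  conv_rhs => rw [← List.map_fst_zip h.le, flattenWS, List.filter_map]
  rfl

lemma validMono_restrictMono {p : Sentence A} {js : List ℕ} (h : p.length = js.length)
    (hsort : js.Pairwise (· < ·)) (hpos : ∀ j ∈ js, 1 ≤ j) : ValidMono (restrictMono p js) := by
  have hsub : (restrictMono p js).2.Sublist js := by
    conv_rhs => rw [← List.map_snd_zip h.ge]
    exact List.filter_sublist.map _
  refine ⟨by simp [restrictMono], List.isChain_iff_pairwise.2 (hsort.sublist hsub),
    fun j hj => hpos j (hsub.subset hj), ?_⟩
  rw [fst_restrictMono h]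
  exact isSentence_flattenWS p

open Classical in
lemma MQ_restrictMono (I : Sentence A) {p : Sentence A} {n : ℕ} (h : p.length = n) :
    MQ I (restrictMono p (List.range' 1 n)) = if flattenWS p = I then 1 else 0 := by
  have hlen : p.length = (List.range' 1 n).length := by simpa using h
  have hvalid : ValidMono (restrictMono p (List.range' 1 n)) :=
    validMono_restrictMono hlen List.pairwise_lt_range' fun j hj => (List.mem_range'_1.1 hj).1
  simp only [MQ, fst_restrictMono hlen, hvalid, and_true]

open Classical in
lemma coeffM_mulQ_MQ (I S L : Sentence A) :
    coeffM (mulQ (MQ I) (MQ S)) L =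
      ∑ x ∈ splits L, if flattenWS x.2 = S then if flattenWS x.1 = I then 1 else 0 else 0 := by
  rw [coeffM, mulQ, sum_map_splitsOf]
  refine Finset.sum_congr rfl fun x hx => ?_
  rw [MQ_restrictMono I (length_fst_of_mem_splits hx),
    MQ_restrictMono S (length_snd_of_mem_splits hx), mul_ite, mul_one, mul_zero]

/-- The index set of the terms `f L • H_{x.1} ⊗ H_{x.2}`, with `x ∈ splits L` and empty words
discarded, of the coproduct of `f`. -/
noncomputable def coproductTerms {f : NSymA A} (hf : InNSym f) :
    Finset (Σ _ : Sentence A, Sentence A × Sentence A) :=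
  hf.1.toFinset.sigma splits

open Classical in
lemma rperp_MQ {f : NSymA A} (hf : InNSym f) (S : Sentence A) :
    rperp (MQ S) f =
      ∑ y ∈ coproductTerms hf with flattenWS y.2.2 = S, f y.1 • Hd (flattenWS y.2.1) := by
  have hpair (I : Sentence A) : pairNQ f (mulQ (MQ I) (MQ S)) • Hd I =
      ∑ y ∈ {y ∈ coproductTerms hf | flattenWS y.2.2 = S} with flattenWS y.2.1 = I,
        f y.1 • Hd I := by
    rw [hf.pairNQ_eq_sum, Finset.sum_filter, Finset.sum_filter, coproductTerms, Finset.sum_sigma,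
      Finset.sum_smul]
    refine Finset.sum_congr rfl fun L _ => ?_
    rw [coeffM_mulQ_MQ, Finset.mul_sum, Finset.sum_smul]
    exact Finset.sum_congr rfl fun x _ => by split_ifs <;> simp
  simp only [rperp, hpair]
  refine (finsum_mem_sum_filter {y ∈ coproductTerms hf | flattenWS y.2.2 = S}
    (fun y => {flattenWS y.2.1}) ?_ fun y I => f y.1 • Hd I).trans ?_
  · rintro y - I
    simp only [Finset.mem_singleton]
    exact ⟨fun h => ⟨h ▸ isSentence_flattenWS _, h.symm⟩, fun h => h.2.symm⟩
  · simp only [Finset.sum_singleton]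

open Classical in
lemma finsum_mem_rperp_MQ {f : NSymA A} (hf : InNSym f) (P : Set (Sentence A)) :
    ∑ᶠ S ∈ P, rperp (MQ S) f =
      ∑ y ∈ coproductTerms hf with flattenWS y.2.2 ∈ P, f y.1 • Hd (flattenWS y.2.1) := by
  simp only [rperp_MQ hf]
  refine (finsum_mem_sum_filter (coproductTerms hf)
    (fun y => if flattenWS y.2.2 ∈ P then {flattenWS y.2.2} else ∅) ?_
    fun y _ => f y.1 • Hd (flattenWS y.2.1)).trans ?_
  · rintro y - S
    split_ifs with h
    · simp only [Finset.mem_singleton]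
      exact ⟨fun hS => ⟨hS ▸ h, hS.symm⟩, fun hS => hS.2.symm⟩
    · simp only [Finset.notMem_empty, false_iff]
      rintro ⟨hS, rfl⟩
      exact h hS
  · rw [Finset.sum_filter]
    exact Finset.sum_congr rfl fun y _ => by split_ifs <;> simp

lemma mulN_sum_smul {ι : Type*} (f : NSymA A) (s : Finset ι) (c : ι → ℚ) (g : ι → NSymA A) :
    mulN f (∑ i ∈ s, c i • g i) = ∑ i ∈ s, c i • mulN f (g i) := by
  ext I
  simp only [mulN, Finset.sum_apply, Pi.smul_apply, smul_eq_mul, Finset.mul_sum]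
  rw [Finset.sum_comm]
  exact Finset.sum_congr rfl fun i _ => Finset.sum_congr rfl fun j _ => mul_left_comm _ _ _

lemma mulN_Hd_Hd (I K : Sentence A) : mulN (Hd I) (Hd K) = Hd (I ++ K) := by
  ext L
  simp only [mulN, Hd]
  by_cases hL : L = I ++ K
  · subst hL
    rw [Finset.sum_eq_single I.length]
    · simp
    · rintro j hj hne
      have htake : (I ++ K).take j ≠ I := fun h => by
        have hlen := congrArg List.length h
        simp only [List.length_take, List.length_append, Finset.mem_range] at hlen hj
        omega
      simp [htake]
    · simp
  · rw [if_neg hL]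
    refine Finset.sum_eq_zero fun j _ => ?_
    by_cases h : L.take j = I
    · have hdrop : L.drop j ≠ K := fun h' => hL (by rw [← h, ← h', List.take_append_drop])
      simp [hdrop]
    · simp [h]

lemma Hw_eq_Hd {w : List A} (hw : w ≠ []) : Hw w = Hd [w] := by simp [Hw, hw]

lemma Bern_eq_sum {f : NSymA A} (hf : InNSym f) {v : List A} (hv : v ≠ []) :
    Bern v f = ∑ z ∈ (coproductTerms hf).sigma fun y => refinements (flattenWS y.2.2),
      ((-1) ^ z.2.length * f z.1.1) •
        Hd ((v ++ z.2.reverse.flatten) :: flattenWS z.1.2.1) := by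
  classical
  have hterm (Q : Sentence A) :
      (-1 : ℚ) ^ Q.length • mulN (Hw (v ++ Q.reverse.flatten))
          (∑ᶠ S ∈ {S : Sentence A | Refines Q S}, rperp (MQ S) f) =
        ∑ y ∈ coproductTerms hf with Refines Q (flattenWS y.2.2),
          ((-1) ^ Q.length * f y.1) • Hd ((v ++ Q.reverse.flatten) :: flattenWS y.2.1) := by
    rw [Hw_eq_Hd (by simp [hv]), finsum_mem_rperp_MQ hf, mulN_sum_smul, Finset.smul_sum]
    simp only [mulN_Hd_Hd, smul_smul, List.singleton_append]
    rfl
  simp only [Bern, hterm]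
  rw [Finset.sum_sigma]
  exact finsum_mem_sum_filter (coproductTerms hf) (fun y => refinements (flattenWS y.2.2))
    (fun y _ Q => mem_refinements)
    fun y Q => ((-1) ^ Q.length * f y.1) • Hd ((v ++ Q.reverse.flatten) :: flattenWS y.2.1)

lemma isSentence_append_cons_flattenWS {v : List A} (hv : v ≠ []) (u : List A) (L : Sentence A) :
    IsSentence ((v ++ u) :: flattenWS L) :=
  isSentence_cons.2 ⟨by simp [hv], isSentence_flattenWS L⟩

lemma InNSym.Bern {f : NSymA A} (hf : InNSym f) {v : List A} (hv : v ≠ []) :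
    InNSym (Bern v f) := by
  rw [Bern_eq_sum hf hv]
  exact inNSym_sum_smul_Hd _ _ fun z _ => isSentence_append_cons_flattenWS hv _ _

lemma InNSym.pairNQ_Bern {f : NSymA A} (hf : InNSym f) {v : List A} (hv : v ≠ [])
    (F : QSymA A) :
    pairNQ (ColoredImm.Bern v f) F = ∑ L ∈ hf.1.toFinset, f L * ∑ x ∈ splits L,
      ∑ Q ∈ refinements (flattenWS x.2),
        (-1) ^ Q.length * coeffM F ((v ++ Q.reverse.flatten) :: flattenWS x.1) := by
  rw [Bern_eq_sum hf hv,
    pairNQ_sum_smul_Hd _ _ fun z _ => isSentence_append_cons_flattenWS hv _ _, Finset.sum_sigma,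
    coproductTerms, Finset.sum_sigma]
  simp only [Finset.mul_sum, mul_assoc, mul_left_comm]

/-! ### Duality -/

open Classical in
lemma sum_splits_refinements_KJB_cons {v j : List A} (hv : v ≠ []) {J : Sentence A}
    (hJ : IsSentence (j :: J)) (L : Sentence A) :
    ∑ x ∈ splits L, ∑ Q ∈ refinements (flattenWS x.2), (-1 : ℚ) ^ Q.length *
        KJB (j :: J) ((v ++ Q.reverse.flatten) :: flattenWS x.1) =
      if v = j then (KJB J L : ℚ) else 0 := by
  let g (u : List A) : ℚ := if v ++ u = j then 1 else 0
  have hKJB (u : List A) (p : Sentence A) : (KJB (j :: J) ((v ++ u) :: flattenWS p) : ℚ) =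
      ∑ y ∈ splits p, KJB J y.1 * g (u ++ y.2.flatten) := by
    have hJ' : IsSentence J := (isSentence_cons.1 hJ).2
    calc
      _ = ∑ y ∈ splits (flattenWS p), KJB J (flattenWS y.1) * g (u ++ y.2.flatten) := by
        rw [KJB_cons_cons (by simp [hv]) hJ]
        simp [KJB_flattenWS hJ', g]
      _ = ∑ y ∈ splits p, KJB J (flattenWS y.1) * g (u ++ y.2.flatten) :=
        sum_splits_flattenWS p fun q t => KJB J q * g (u ++ t)
      _ = _ := by simp only [KJB_flattenWS hJ']
  calc
    _ = ∑ x ∈ splits L, ∑ y ∈ splits x.1,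
          KJB J y.1 * signedRefinementSum g y.2.flatten (flattenWS x.2) := by
      refine Finset.sum_congr rfl fun x _ => ?_
      simp only [hKJB, signedRefinementSum, Finset.mul_sum]
      rw [Finset.sum_comm]
      simp only [mul_left_comm]
    _ = ∑ x ∈ splits L, KJB J x.1 *
          ∑ y ∈ splits x.2, signedRefinementSum g y.1.flatten (flattenWS y.2) := by
      simp only [Finset.mul_sum]
      exact sum_splits_assoc L fun p q r =>
        KJB J p * signedRefinementSum g q.flatten (flattenWS r)
    _ = ∑ x ∈ splits L, if flattenWS x.2 = [] then KJB J x.1 * g [] else 0 := by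
      simp only [sum_splits_signedRefinementSum, mul_ite, mul_zero]
    _ = KJB J L * g [] := sum_splits_ite_flatten_snd_eq_nil L fun p => KJB J p * g []
    _ = _ := by simp [g]

open Classical in
lemma pairNQ_Bern_dualImm_cons {f : NSymA A} (hf : InNSym f) {v j : List A} (hv : v ≠ [])
    {J : Sentence A} (hJ : IsSentence (j :: J)) :
    pairNQ (Bern v f) (dualImm (j :: J)) = if v = j then pairNQ f (dualImm J) else 0 := by
  have hpair : pairNQ f (dualImm J) = ∑ L ∈ hf.1.toFinset, f L * KJB J L := by
    rw [hf.pairNQ_eq_sum]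
    refine Finset.sum_congr rfl fun L hL => ?_
    rw [coeffM_dualImm J (hf.2 L (by simpa using hL))]
  simp only [hf.pairNQ_Bern hv, coeffM_dualImm _ (isSentence_append_cons_flattenWS hv _ _),
    sum_splits_refinements_KJB_cons hv hJ, hpair]
  split_ifs
  · rfl
  · simp only [mul_zero, Finset.sum_const_zero]

lemma pairNQ_Bern_dualImm_nil {f : NSymA A} (hf : InNSym f) {v : List A} (hv : v ≠ []) :
    pairNQ (Bern v f) (dualImm []) = 0 := by
  simp only [hf.pairNQ_Bern hv, coeffM_dualImm _ (isSentence_append_cons_flattenWS hv _ _),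
    KJB_nil, flattenWS_cons_of_ne_nil (List.append_ne_nil_of_left_ne_nil hv _)]
  simp

lemma pairNQ_Hd {I : Sentence A} (hI : IsSentence I) (F : QSymA A) :
    pairNQ (Hd I) F = coeffM F I := by
  simpa using pairNQ_sum_smul_Hd {I} (fun _ => 1) (K := id) (by simpa using hI) F

lemma inNSym_Hd {I : Sentence A} (hI : IsSentence I) : InNSym (Hd I) := by
  simpa using inNSym_sum_smul_Hd {I} (fun _ => 1) (K := id) (by simpa using hI)

lemma inNSym_ImmS {I : Sentence A} (hI : IsSentence I) : InNSym (ImmS I) := by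
  induction I with
  | nil => exact inNSym_Hd hI
  | cons v I ih =>
    obtain ⟨hv, hI⟩ := isSentence_cons.1 hI
    exact (ih hI).Bern hv

end

open Classical in
/-- The colored immaculate basis is dual to the colored dual immaculate
basis: `⟨𝔖_I, 𝔖*_J⟩ = δ_{I,J}` for all sentences `I` and `J`. -/
theorem statement14 {A : Type*} (I J : Sentence A) (hI : IsSentence I) (hJ : IsSentence J) :
    pairNQ (ImmS I) (dualImm J) = if I = J then 1 else 0 := by
  induction I generalizing J with
  | nil =>
    change pairNQ (Hd []) (dualImm J) = _
    rw [pairNQ_Hd isSentence_nil, coeffM_dualImm J isSentence_nil]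
    cases J with
    | nil => simp [KJB_nil]
    | cons j J => simp [KJB_cons_nil (isSentence_cons.1 hJ).1]
  | cons v I ih =>
    obtain ⟨hv, hI⟩ := isSentence_cons.1 hI
    change pairNQ (Bern v (ImmS I)) (dualImm J) = _
    cases J with
    | nil => simp [pairNQ_Bern_dualImm_nil (inNSym_ImmS hI) hv]
    | cons j J =>
      rw [pairNQ_Bern_dualImm_cons (inNSym_ImmS hI) hv hJ, ih J hI (isSentence_cons.1 hJ).2]
      simp [ite_and]

end ColoredImm
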